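/- arXiv:2507.06115 — 2 statements merged into one kernel-verified Lean document; each statement's English description precedes it below -/
import Mathlib

section
/- Let 1 ≤ p, q ≤ ∞ satisfy 1/p + 1/q = (log₂ 6)/2. Then the inequality ‖f*g‖_{ℓ^2(ℤ^d)} ≤ ‖f‖_{ℓ^p(ℤ^d)} ‖g‖_{ℓ^q(ℤ^d)} holds for every d ≥ 1 and all f, g : ℤ^d → ℝ supported in {0,1}^d if and only if 4/3 ≤ p, q ≤ 1 / ( (log₂ 3)/2 − 1/4 ). -/
open scoped BigOperators ENNReal

/-- Convolution of two functions on `ℤ^d`. -/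
noncomputable def cconv {d : ℕ} (f g : (Fin d → ℤ) → ℝ) : (Fin d → ℤ) → ℝ :=
  fun m => ∑' u : Fin d → ℤ, f u * g (m - u)

/-- A point of `ℤ^d` lies in the hypercube `{0,1}^d`. -/
def InCube {d : ℕ} (x : Fin d → ℤ) : Prop := ∀ i, x i = 0 ∨ x i = 1

/-- A function on `ℤ^d` is supported in `{0,1}^d`. -/
def SupportedInCube {d : ℕ} (f : (Fin d → ℤ) → ℝ) : Prop :=
  ∀ x : Fin d → ℤ, ¬ InCube x → f x = 0

/-- The `ℓ^s` norm of a function on `ℤ^d` (for `0 < s < ∞`). -/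
noncomputable def lnorm {d : ℕ} (s : ℝ) (f : (Fin d → ℤ) → ℝ) : ℝ :=
  (∑' x : Fin d → ℤ, |f x| ^ s) ^ (1 / s)


/-- The `ℓ^s` norm for an extended exponent `s ∈ (0,∞]`:
for `s = ∞` it is the sup norm, otherwise the usual `ℓ^s` norm. -/
noncomputable def lnormE {d : ℕ} (s : ℝ≥0∞) (f : (Fin d → ℤ) → ℝ) : ℝ :=
  if s = ∞ then ⨆ x : Fin d → ℤ, |f x|
  else (∑' x : Fin d → ℤ, |f x| ^ s.toReal) ^ (1 / s.toReal)

/-!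
By induction on the dimension, slicing along the first coordinate and using Minkowski's inequality
for the middle slice of `f * g`, Young's inequality on the cube follows from its case `d = 1`. The
set of pairs `(1/p, 1/q)` for which that two-point inequality holds is convex (Riesz–Thorin), so on
the critical line it suffices to treat the endpoint `(3/4, κ)`, `κ = (log₂ 3)/2 - 1/4`, and its
mirror image. There AM-GM eliminates `f` and leaves, with `s = 1/(2κ)`,
`X² + XY + Y² ≤ √(X² + Y²) (X ^ s + Y ^ s) ^ (1/s)`, which is an equality for `X = Y` and for
`Y = 0`. For `X = 1` the logarithm of the ratio of the two sides first increases and then decreases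
in `Y ∈ [0, 1]`: its derivative changes sign only once, because the same is true, one derivative
further, of the function that determines this sign.

Conversely, on the critical line `f = g = (1, 1)` gives equality for `d = 1`. The perturbation
`f = (1 + x, 1 - x)` must not violate the inequality, and the second-order condition at `x = 0`
reads `p ≥ 4/3`; by symmetry `q ≥ 4/3`, and the upper bounds are then the critical line again.
-/

open Function Set Topology Pointwise

section Norm

variable {d : ℕ} {s : ℝ}

lemma lnorm_nonneg (s : ℝ) (f : (Fin d → ℤ) → ℝ) : 0 ≤ lnorm s f :=
  Real.rpow_nonneg (tsum_nonneg fun _ ↦ Real.rpow_nonneg (abs_nonneg _) _) _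

lemma lnorm_rpow (hs : s ≠ 0) (f : (Fin d → ℤ) → ℝ) : lnorm s f ^ s = ∑' x, |f x| ^ s := by
  rw [lnorm, one_div, Real.rpow_inv_rpow _ hs]
  exact tsum_nonneg fun _ ↦ Real.rpow_nonneg (abs_nonneg _) _

lemma lnormE_of_ne_top {p : ℝ≥0∞} (hp : p ≠ ∞) (f : (Fin d → ℤ) → ℝ) :
    lnormE p f = lnorm p.toReal f :=
  if_neg hp

lemma lnormE_top (f : (Fin d → ℤ) → ℝ) : lnormE ∞ f = ⨆ x, |f x| :=
  if_pos rfl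

lemma lnorm_fin_zero (hs : s ≠ 0) (f : (Fin 0 → ℤ) → ℝ) : lnorm s f = |f 0| := by
  rw [lnorm, tsum_fintype, Fintype.sum_subsingleton _ 0, one_div,
    Real.rpow_rpow_inv (abs_nonneg _) hs]

lemma summable_abs_rpow (hs : s ≠ 0) {f : (Fin d → ℤ) → ℝ} (hf : f.support.Finite) :
    Summable fun x ↦ |f x| ^ s := by
  refine summable_of_hasFiniteSupport (hf.subset fun x hx hfx ↦ hx ?_)
  simp [hfx, Real.zero_rpow hs]

lemma lnorm_add_le (hs : 1 ≤ s) {f g : (Fin d → ℤ) → ℝ} (hf : Summable fun x ↦ |f x| ^ s)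
    (hg : Summable fun x ↦ |g x| ^ s) : lnorm s (f + g) ≤ lnorm s f + lnorm s g := by
  obtain ⟨hsum, hle⟩ := Real.Lp_add_le_tsum_of_nonneg hs (fun x ↦ abs_nonneg (f x))
    (fun x ↦ abs_nonneg (g x)) hf hg
  have hpt (x : Fin d → ℤ) : |(f + g) x| ^ s ≤ (|f x| + |g x|) ^ s :=
    Real.rpow_le_rpow (abs_nonneg _) (abs_add_le _ _) (by linarith)
  have hnn (x : Fin d → ℤ) : 0 ≤ |(f + g) x| ^ s := Real.rpow_nonneg (abs_nonneg _) _
  refine le_trans (Real.rpow_le_rpow (tsum_nonneg hnn) ?_ (by positivity)) hle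
  exact (hsum.of_nonneg_of_le hnn hpt).tsum_le_tsum hpt hsum

end Norm

section Convolution

variable {d : ℕ}

lemma cconv_comm (f g : (Fin d → ℤ) → ℝ) : cconv f g = cconv g f := by
  funext m
  rw [cconv, cconv, ← (Equiv.subLeft m).tsum_eq]
  simp [mul_comm]

lemma cconv_zero (f : (Fin d → ℤ) → ℝ) : cconv f 0 = 0 := by
  funext m
  simp [cconv]

lemma cconv_fin_zero (f g : (Fin 0 → ℤ) → ℝ) (m : Fin 0 → ℤ) : cconv f g m = f 0 * g 0 := by
  rw [cconv, tsum_fintype, Fintype.sum_subsingleton _ 0, Subsingleton.elim (m - 0) 0]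

lemma finite_support_cconv {f g : (Fin d → ℤ) → ℝ} (hf : f.support.Finite)
    (hg : g.support.Finite) : (cconv f g).support.Finite := by
  refine (hf.add hg).subset fun m hm ↦ ?_
  obtain ⟨u, hu⟩ : ∃ u, f u * g (m - u) ≠ 0 := by
    by_contra! h
    exact hm (by simp [cconv, h])
  exact ⟨u, left_ne_zero_of_mul hu, m - u, right_ne_zero_of_mul hu, add_sub_cancel u m⟩

lemma SupportedInCube.finite_support {f : (Fin d → ℤ) → ℝ} (hf : SupportedInCube f) :
    f.support.Finite := by
  refine (Finite.pi' fun _ ↦ toFinite ({0, 1} : Set ℤ)).subset fun x hx ↦ ?_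
  by_contra h
  exact hx (hf x h)

end Convolution

section Slice

variable {d : ℕ}

/-- The slice of a function on `ℤ^(d+1)` at first coordinate `i`, as a function on `ℤ^d`. -/
def slice (f : (Fin (d + 1) → ℤ) → ℝ) (i : ℤ) : (Fin d → ℤ) → ℝ :=
  fun y ↦ f (Fin.cons i y)

lemma tsum_eq_sum_tsum_slice {F : (Fin (d + 1) → ℤ) → ℝ} (hF : Summable F) {T : Finset ℤ}
    (hT : ∀ i ∉ T, slice F i = 0) : ∑' x, F x = ∑ i ∈ T, ∑' y, slice F i y := by
  let e := Fin.consEquiv fun _ : Fin (d + 1) ↦ ℤ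
  calc ∑' x, F x = ∑' z : ℤ × (Fin d → ℤ), F (e z) := (e.tsum_eq F).symm
    _ = ∑' i, ∑' y, slice F i y := (e.summable_iff.2 hF).tsum_prod
    _ = ∑ i ∈ T, ∑' y, slice F i y := tsum_eq_sum fun i hi ↦ by simp [hT i hi]

lemma lnorm_rpow_eq_sum_slice {s : ℝ} (hs : s ≠ 0) {f : (Fin (d + 1) → ℤ) → ℝ}
    (hf : Summable fun x ↦ |f x| ^ s) {T : Finset ℤ} (hT : ∀ i ∉ T, slice f i = 0) :
    lnorm s f ^ s = ∑ i ∈ T, lnorm s (slice f i) ^ s := by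
  rw [lnorm_rpow hs, tsum_eq_sum_tsum_slice hf (T := T)]
  · exact Finset.sum_congr rfl fun i _ ↦ (lnorm_rpow hs _).symm
  · intro i hi
    funext y
    have : f (Fin.cons i y) = 0 := congrFun (hT i hi) y
    simp [slice, this, Real.zero_rpow hs]

lemma slice_cconv {f : (Fin (d + 1) → ℤ) → ℝ} (hf : f.support.Finite) {T : Finset ℤ}
    (hT : ∀ i ∉ T, slice f i = 0) (g : (Fin (d + 1) → ℤ) → ℝ) (k : ℤ) :
    slice (cconv f g) k = ∑ i ∈ T, cconv (slice f i) (slice g (k - i)) := by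
  funext m
  have hsub (i : ℤ) (y : Fin d → ℤ) :
      (Fin.cons k m : Fin (d + 1) → ℤ) - Fin.cons i y = Fin.cons (k - i) (m - y) :=
    Matrix.cons_sub_cons k m i y
  have hsum : Summable fun u ↦ f u * g (Fin.cons k m - u) :=
    summable_of_hasFiniteSupport (hf.subset fun _ hu ↦ left_ne_zero_of_mul hu)
  simp only [slice, cconv, Finset.sum_apply]
  rw [tsum_eq_sum_tsum_slice hsum (T := T)]
  · simp only [slice, hsub]
  · intro i hi
    funext y
    have : f (Fin.cons i y) = 0 := congrFun (hT i hi) y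
    simp [slice, this]

variable {f g : (Fin (d + 1) → ℤ) → ℝ}

lemma supportedInCube_slice (hf : SupportedInCube f) (i : ℤ) : SupportedInCube (slice f i) :=
  fun _ hy ↦ hf _ fun h ↦ hy fun j ↦ by simpa using h j.succ

lemma SupportedInCube.slice_eq_zero (hf : SupportedInCube f) {i : ℤ}
    (hi : i ∉ ({0, 1} : Finset ℤ)) : slice f i = 0 := by
  funext y
  exact hf _ fun h ↦ hi (by simpa using h 0)

lemma SupportedInCube.slice_cconv (hf : SupportedInCube f) (g : (Fin (d + 1) → ℤ) → ℝ) (k : ℤ) :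
    slice (cconv f g) k =
      cconv (slice f 0) (slice g k) + cconv (slice f 1) (slice g (k - 1)) := by
  rw [_root_.slice_cconv hf.finite_support fun _ ↦ hf.slice_eq_zero,
    Finset.sum_pair zero_ne_one, sub_zero]

variable {s : ℝ}

lemma SupportedInCube.lnorm_rpow (hf : SupportedInCube f) (hs : s ≠ 0) :
    lnorm s f ^ s = lnorm s (slice f 0) ^ s + lnorm s (slice f 1) ^ s := by
  rw [lnorm_rpow_eq_sum_slice hs (summable_abs_rpow hs hf.finite_support)
    fun _ ↦ hf.slice_eq_zero, Finset.sum_pair zero_ne_one]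

lemma SupportedInCube.lnorm_cconv_rpow (hf : SupportedInCube f) (hg : SupportedInCube g)
    (hs : s ≠ 0) :
    lnorm s (cconv f g) ^ s = lnorm s (cconv (slice f 0) (slice g 0)) ^ s
      + lnorm s (cconv (slice f 0) (slice g 1) + cconv (slice f 1) (slice g 0)) ^ s
      + lnorm s (cconv (slice f 1) (slice g 1)) ^ s := by
  have hvanish {i : ℤ} (hi : i ≠ 0 ∧ i ≠ 1) : slice g i = 0 :=
    hg.slice_eq_zero (by simpa using hi)
  have hT (k : ℤ) (hk : k ∉ ({0, 1, 2} : Finset ℤ)) : slice (cconv f g) k = 0 := by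
    simp only [Finset.mem_insert, Finset.mem_singleton] at hk
    rw [hf.slice_cconv, hvanish (i := k) (by omega), hvanish (i := k - 1) (by omega)]
    simp [cconv_zero]
  rw [lnorm_rpow_eq_sum_slice hs (summable_abs_rpow hs
      (finite_support_cconv hf.finite_support hg.finite_support)) hT,
    Finset.sum_insert (by decide), Finset.sum_pair (by decide)]
  simp only [hf.slice_cconv]
  rw [hvanish (i := 0 - 1) (by decide), hvanish (i := 2) (by decide)]
  norm_num [cconv_zero, add_assoc]

end Slice

section TwoPoint

/-- The pairs of reciprocal exponents `(x, y) = (1/p, 1/q)` for which Young's inequality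
`‖f * g‖_r ≤ ‖f‖_p ‖g‖_q` holds for nonnegative functions on `{0, 1}`. It is encoded in
normalised form: `f = (A ^ x, B ^ x)` and `g = (C ^ y, D ^ y)` have norm one exactly when
`A + B = 1` and `C + D = 1`, which makes the left-hand side a convex function of `(x, y)`. -/
def youngRegion (r : ℝ) : Set (ℝ × ℝ) :=
  {z | 0 < z.1 ∧ 0 < z.2 ∧ ∀ A B C D : ℝ, 0 ≤ A → 0 ≤ B → 0 ≤ C → 0 ≤ D → A + B = 1 → C + D = 1 →
    (A ^ z.1 * C ^ z.2) ^ r + (A ^ z.1 * D ^ z.2 + B ^ z.1 * C ^ z.2) ^ r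
      + (B ^ z.1 * D ^ z.2) ^ r ≤ 1}

lemma swap_mem_youngRegion {r : ℝ} {z : ℝ × ℝ} (hz : z ∈ youngRegion r) :
    z.swap ∈ youngRegion r := by
  refine ⟨hz.2.1, hz.1, fun A B C D hA hB hC hD hAB hCD ↦ ?_⟩
  have h := hz.2.2 C D A B hC hD hA hB hCD hAB
  simpa only [Prod.fst_swap, Prod.snd_swap, mul_comm, add_comm] using h

lemma convexOn_rpow_mul_rpow {A C : ℝ} (hA : 0 ≤ A) (hC : 0 ≤ C) :
    ConvexOn ℝ (Ioi 0 ×ˢ Ioi 0) fun z : ℝ × ℝ ↦ A ^ z.1 * C ^ z.2 := by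
  refine ⟨(convex_Ioi 0).prod (convex_Ioi 0), ?_⟩
  rintro ⟨x₀, y₀⟩ ⟨hx₀, hy₀⟩ ⟨x₁, y₁⟩ ⟨hx₁, hy₁⟩ a b ha hb hab
  have hsplit {u v w : ℝ} (hw : 0 ≤ w) (hu : u ∈ Ioi 0) (hv : v ∈ Ioi 0) :
      w ^ (a * u + b * v) = (w ^ u) ^ a * (w ^ v) ^ b := by
    have hpos : 0 < a * u + b * v := convex_Ioi 0 hu hv ha hb hab
    rw [Real.rpow_add' hw hpos.ne', ← Real.rpow_mul hw, ← Real.rpow_mul hw, mul_comm a,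
      mul_comm b]
  have hgeom := Real.geom_mean_le_arith_mean2_weighted ha hb
    (mul_nonneg (Real.rpow_nonneg hA x₀) (Real.rpow_nonneg hC y₀))
    (mul_nonneg (Real.rpow_nonneg hA x₁) (Real.rpow_nonneg hC y₁)) hab
  rw [Real.mul_rpow (by positivity) (by positivity),
    Real.mul_rpow (by positivity) (by positivity)] at hgeom
  simp only [Prod.smul_mk, Prod.mk_add_mk, smul_eq_mul, hsplit hA hx₀ hx₁, hsplit hC hy₀ hy₁]
  linarith

lemma convexOn_rpow_of_nonneg {E : Type*} [AddCommGroup E] [Module ℝ E] {S : Set E} {f : E → ℝ}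
    (hf : ConvexOn ℝ S f) (hf₀ : ∀ z ∈ S, 0 ≤ f z) {r : ℝ} (hr : 1 ≤ r) :
    ConvexOn ℝ S fun z ↦ f z ^ r := by
  refine ⟨hf.1, fun z hz w hw a b ha hb hab ↦ ?_⟩
  calc f (a • z + b • w) ^ r ≤ (a • f z + b • f w) ^ r :=
        Real.rpow_le_rpow (hf₀ _ (hf.1 hz hw ha hb hab)) (hf.2 hz hw ha hb hab) (by linarith)
    _ ≤ a • f z ^ r + b • f w ^ r := (convexOn_rpow hr).2 (hf₀ z hz) (hf₀ w hw) ha hb hab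

lemma convex_youngRegion {r : ℝ} (hr : 1 ≤ r) : Convex ℝ (youngRegion r) := by
  intro z hz w hw a b ha hb hab
  have hzQ : z ∈ Ioi (0 : ℝ) ×ˢ Ioi (0 : ℝ) := ⟨hz.1, hz.2.1⟩
  have hwQ : w ∈ Ioi (0 : ℝ) ×ˢ Ioi (0 : ℝ) := ⟨hw.1, hw.2.1⟩
  obtain ⟨hx, hy⟩ := (convex_Ioi (0 : ℝ)).prod (convex_Ioi (0 : ℝ)) hzQ hwQ ha hb hab
  refine ⟨hx, hy, fun A B C D hA hB hC hD hAB hCD ↦ ?_⟩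
  have hconv := ((convexOn_rpow_of_nonneg (convexOn_rpow_mul_rpow hA hC)
    (fun _ _ ↦ by positivity) hr).add
    (convexOn_rpow_of_nonneg ((convexOn_rpow_mul_rpow hA hD).add (convexOn_rpow_mul_rpow hB hC))
    (fun _ _ ↦ by simp only [Pi.add_apply]; positivity) hr)).add
    (convexOn_rpow_of_nonneg (convexOn_rpow_mul_rpow hB hD) (fun _ _ ↦ by positivity) hr)
  exact (hconv.convex_le 1 ⟨hzQ, hz.2.2 A B C D hA hB hC hD hAB hCD⟩
    ⟨hwQ, hw.2.2 A B C D hA hB hC hD hAB hCD⟩ ha hb hab).2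

lemma exists_eq_mul_rpow {x M a b : ℝ} (hx : 0 < x) (hM : 0 ≤ M) (ha : 0 ≤ a) (hb : 0 ≤ b)
    (h : M ^ (1 / x) = a ^ (1 / x) + b ^ (1 / x)) :
    ∃ A B : ℝ, 0 ≤ A ∧ 0 ≤ B ∧ A + B = 1 ∧ a = M * A ^ x ∧ b = M * B ^ x := by
  rw [one_div] at h
  rcases hM.eq_or_lt with rfl | hM
  · rw [Real.zero_rpow (inv_pos.2 hx).ne'] at h
    have ha' := Real.rpow_nonneg ha x⁻¹
    have hb' := Real.rpow_nonneg hb x⁻¹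
    refine ⟨1, 0, zero_le_one, le_rfl, add_zero 1, ?_, ?_⟩
    · rw [zero_mul, ← Real.rpow_eq_zero ha (inv_pos.2 hx).ne']; linarith
    · rw [zero_mul, ← Real.rpow_eq_zero hb (inv_pos.2 hx).ne']; linarith
  · refine ⟨(a / M) ^ x⁻¹, (b / M) ^ x⁻¹, by positivity, by positivity, ?_, ?_, ?_⟩
    · rw [Real.div_rpow ha hM.le, Real.div_rpow hb hM.le, ← add_div, ← h,
        div_self (Real.rpow_pos_of_pos hM _).ne']
    all_goals rw [Real.rpow_inv_rpow (by positivity) hx.ne', mul_div_cancel₀ _ hM.ne']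

lemma two_point_young {r x y : ℝ} (hz : (x, y) ∈ youngRegion r) {M N a b c d : ℝ} (hM : 0 ≤ M)
    (hN : 0 ≤ N) (ha : 0 ≤ a) (hb : 0 ≤ b) (hc : 0 ≤ c) (hd : 0 ≤ d)
    (hMab : M ^ (1 / x) = a ^ (1 / x) + b ^ (1 / x))
    (hNcd : N ^ (1 / y) = c ^ (1 / y) + d ^ (1 / y)) :
    (a * c) ^ r + (a * d + b * c) ^ r + (b * d) ^ r ≤ (M * N) ^ r := by
  obtain ⟨hx, hy, hnormal⟩ := hz
  obtain ⟨A, B, hA, hB, hAB, rfl, rfl⟩ := exists_eq_mul_rpow hx hM ha hb hMab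
  obtain ⟨C, D, hC, hD, hCD, rfl, rfl⟩ := exists_eq_mul_rpow hy hN hc hd hNcd
  have hfactor {t : ℝ} (ht : 0 ≤ t) : (M * N * t) ^ r = (M * N) ^ r * t ^ r :=
    Real.mul_rpow (by positivity) ht
  calc _ = (M * N * (A ^ x * C ^ y)) ^ r + (M * N * (A ^ x * D ^ y + B ^ x * C ^ y)) ^ r
        + (M * N * (B ^ x * D ^ y)) ^ r := by ring_nf
    _ = (M * N) ^ r * ((A ^ x * C ^ y) ^ r + (A ^ x * D ^ y + B ^ x * C ^ y) ^ r
        + (B ^ x * D ^ y) ^ r) := by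
      rw [hfactor (by positivity), hfactor (by positivity), hfactor (by positivity)]
      ring
    _ ≤ (M * N) ^ r := mul_le_of_le_one_right (by positivity)
      (hnormal A B C D hA hB hC hD hAB hCD)

theorem lnorm_cconv_le {r x y : ℝ} (hr : 1 ≤ r) (hz : (x, y) ∈ youngRegion r) {d : ℕ}
    {f g : (Fin d → ℤ) → ℝ} (hf : SupportedInCube f) (hg : SupportedInCube g) :
    lnorm r (cconv f g) ≤ lnorm (1 / x) f * lnorm (1 / y) g := by
  have hr₀ : 0 < r := by linarith
  have hx : 1 / x ≠ 0 := (one_div_pos.2 hz.1).ne'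
  have hy : 1 / y ≠ 0 := (one_div_pos.2 hz.2.1).ne'
  induction d with
  | zero =>
    rw [lnorm_fin_zero hr₀.ne', lnorm_fin_zero hx, lnorm_fin_zero hy, cconv_fin_zero, abs_mul]
  | succ d ih =>
    have ih' (i j : ℤ) := ih (supportedInCube_slice hf i) (supportedInCube_slice hg j)
    have hsum (i j : ℤ) := summable_abs_rpow hr₀.ne' (finite_support_cconv
      (supportedInCube_slice hf i).finite_support (supportedInCube_slice hg j).finite_support)
    have hmid := (lnorm_add_le hr (hsum 0 1) (hsum 1 0)).trans (add_le_add (ih' 0 1) (ih' 1 0))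
    have hnonneg : 0 ≤ lnorm (1 / x) f * lnorm (1 / y) g :=
      mul_nonneg (lnorm_nonneg _ _) (lnorm_nonneg _ _)
    rw [← Real.rpow_le_rpow_iff (lnorm_nonneg _ _) hnonneg hr₀, hf.lnorm_cconv_rpow hg hr₀.ne']
    refine le_trans ?_ (two_point_young hz (lnorm_nonneg _ _) (lnorm_nonneg _ _)
      (lnorm_nonneg _ _) (lnorm_nonneg _ _) (lnorm_nonneg _ _) (lnorm_nonneg _ _)
      (hf.lnorm_rpow hx) (hg.lnorm_rpow hy))
    gcongr <;> first | exact lnorm_nonneg _ _ | exact ih' _ _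

end TwoPoint

section Endpoint

lemma three_halves_lt_logb_two_three : 3 / 2 < Real.logb 2 3 := by
  have h : 3 < Real.logb 2 (3 ^ 2) := by
    rw [Real.lt_logb_iff_rpow_lt (by norm_num) (by norm_num)]
    norm_num
  rw [Real.logb_pow] at h
  push_cast at h
  linarith

lemma min_le_of_deriv_crossing {f f' : ℝ → ℝ} {a b t : ℝ} (hf : ContinuousOn f (Icc a b))
    (hf' : ∀ x ∈ Ioo a b, HasDerivAt f (f' x) x)
    (hcross : ∀ u ∈ Ioo a b, ∀ v ∈ Ioo a b, u < v → f' u < 0 → f' v ≤ 0) (ht : t ∈ Icc a b) :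
    min (f a) (f b) ≤ f t := by
  by_contra! hlt
  obtain ⟨hta, htb⟩ := lt_min_iff.1 hlt
  have hat : a < t := ht.1.lt_of_ne (by rintro rfl; exact hta.false)
  have htb' : t < b := ht.2.lt_of_ne (by rintro rfl; exact htb.false)
  obtain ⟨u, hu, hslope_u⟩ := exists_hasDerivAt_eq_slope f f' hat
    (hf.mono (Icc_subset_Icc_right ht.2)) fun x hx ↦ hf' x ⟨hx.1, hx.2.trans htb'⟩
  obtain ⟨v, hv, hslope_v⟩ := exists_hasDerivAt_eq_slope f f' htb'
    (hf.mono (Icc_subset_Icc_left ht.1)) fun x hx ↦ hf' x ⟨hat.trans hx.1, hx.2⟩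
  have hneg : f' u < 0 := hslope_u ▸ div_neg_of_neg_of_pos (by linarith) (by linarith)
  have hpos : 0 < f' v := hslope_v ▸ div_pos (by linarith) (by linarith)
  exact (hcross u ⟨hu.1, hu.2.trans htb'⟩ v ⟨hat.trans hv.1, hv.2⟩ (hu.2.trans hv.1)
    hneg).not_gt hpos

/-- The logarithm of the ratio of the two sides of
`1 + t + t ^ 2 ≤ √(1 + t ^ 2) * (1 + t ^ s) ^ (1 / s)`. -/
noncomputable def logGap (s t : ℝ) : ℝ :=
  1 / s * Real.log (1 + t ^ s) + 1 / 2 * Real.log (1 + t ^ 2) - Real.log (1 + t + t ^ 2)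

/-- The logarithm of `t (1 + t + t ^ 3) / (t ^ s (1 + t ^ 2 + t ^ 3))`, whose sign is opposite to
that of the derivative of `logGap s`. -/
noncomputable def logSlope (s t : ℝ) : ℝ :=
  (1 - s) * Real.log t + Real.log (1 + t + t ^ 3) - Real.log (1 + t ^ 2 + t ^ 3)

/-- The part of `t * deriv (logSlope s) t` that does not depend on `s`; by the symmetry
`t ↦ 1 / t` it is a function of `z = t + 1 / t`. -/
noncomputable def slopeRate (z : ℝ) : ℝ :=
  (z - 3) * (z + 1) / (z ^ 3 + z ^ 2 - 2 * z + 1)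

lemma slopeRate_denom_pos {z : ℝ} (hz : 2 ≤ z) : 0 < z ^ 3 + z ^ 2 - 2 * z + 1 := by
  nlinarith [mul_nonneg (sub_nonneg.2 hz) (sq_nonneg z)]

lemma lt_three_of_slopeRate_neg {z : ℝ} (hz : 2 ≤ z) (h : slopeRate z < 0) : z < 3 := by
  by_contra! hz₃
  exact h.not_ge (div_nonneg (mul_nonneg (by linarith) (by linarith)) (slopeRate_denom_pos hz).le)

lemma slopeRate_monotoneOn : MonotoneOn slopeRate (Icc 2 3) := by
  rintro z ⟨hz₂, -⟩ w ⟨hw₂, hw₃⟩ hzw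
  have hnum : (3 - w) * (w + 1) ≤ (3 - z) * (z + 1) := by nlinarith
  have hden : z ^ 3 + z ^ 2 - 2 * z + 1 ≤ w ^ 3 + w ^ 2 - 2 * w + 1 := by
    have hfac : 0 ≤ (w - z) * (w ^ 2 + w * z + z ^ 2 + w + z - 2) :=
      mul_nonneg (by linarith) (by nlinarith)
    linarith
  have hquot : (3 - w) * (w + 1) / (w ^ 3 + w ^ 2 - 2 * w + 1)
      ≤ (3 - z) * (z + 1) / (z ^ 3 + z ^ 2 - 2 * z + 1) :=
    div_le_div₀ (mul_nonneg (by linarith) (by linarith)) hnum (slopeRate_denom_pos hz₂) hden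
  rw [slopeRate, slopeRate, ← neg_sub 3 z, ← neg_sub 3 w, neg_mul, neg_mul, neg_div, neg_div]
  exact neg_le_neg hquot

lemma two_le_add_one_div {t : ℝ} (ht : 0 < t) : 2 ≤ t + 1 / t := by
  have h : t + 1 / t - 2 = (t - 1) ^ 2 / t := by field_simp; ring
  have : 0 ≤ (t - 1) ^ 2 / t := by positivity
  linarith

lemma add_one_div_antitoneOn : AntitoneOn (fun t : ℝ ↦ t + 1 / t) (Ioc 0 1) := by
  rintro u ⟨hu₀, hu₁⟩ v ⟨hv₀, hv₁⟩ huv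
  have h : (u + 1 / u) - (v + 1 / v) = (v - u) * (1 - u * v) / (u * v) := by field_simp; ring
  have : 0 ≤ (v - u) * (1 - u * v) / (u * v) :=
    div_nonneg (mul_nonneg (by linarith) (by nlinarith)) (by positivity)
  dsimp only
  linarith

variable {s t : ℝ}

lemma hasDerivAt_logSlope (s : ℝ) (ht : 0 < t) :
    HasDerivAt (logSlope s) ((1 - s + slopeRate (t + 1 / t)) / t) t := by
  have h₁ : HasDerivAt (fun t : ℝ ↦ 1 + t + t ^ 3) (1 + 3 * t ^ 2) t := by
    simpa using ((hasDerivAt_id t).const_add 1).fun_add (hasDerivAt_pow 3 t)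
  have h₂ : HasDerivAt (fun t : ℝ ↦ 1 + t ^ 2 + t ^ 3) (2 * t + 3 * t ^ 2) t := by
    simpa using ((hasDerivAt_pow 2 t).const_add 1).fun_add (hasDerivAt_pow 3 t)
  have hlog := (((Real.hasDerivAt_log ht.ne').const_mul (1 - s)).add
    (h₁.log (by positivity))).sub (h₂.log (by positivity))
  have hrate : slopeRate (t + 1 / t) = t * (1 - 2 * t - t ^ 2 - 2 * t ^ 3 + t ^ 4)
      / ((1 + t + t ^ 3) * (1 + t ^ 2 + t ^ 3)) := by
    have hnum : (t + 1 / t - 3) * (t + 1 / t + 1)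
        = (1 - 2 * t - t ^ 2 - 2 * t ^ 3 + t ^ 4) / t ^ 2 := by
      field_simp; ring
    have hden : (t + 1 / t) ^ 3 + (t + 1 / t) ^ 2 - 2 * (t + 1 / t) + 1
        = (1 + t + t ^ 3) * (1 + t ^ 2 + t ^ 3) / t ^ 3 := by
      field_simp; ring
    rw [slopeRate, hnum, hden]
    field_simp
  refine hlog.congr_deriv ?_
  rw [hrate]
  field_simp
  ring

lemma logSlope_nonneg_of_lt {u v : ℝ} (hs : s ≤ 1) (hu : 0 < u) (huv : u < v) (hv : v ≤ 1)
    (h : 0 < logSlope s u) : 0 ≤ logSlope s v := by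
  have hderiv {x : ℝ} (hx : u ≤ x) := hasDerivAt_logSlope s (hu.trans_le hx)
  have hone : logSlope s 1 = 0 := by simp [logSlope]
  rw [← min_eq_right h.le, ← hone]
  refine min_le_of_deriv_crossing
    (fun x hx ↦ (hderiv hx.1).continuousAt.continuousWithinAt)
    (fun x hx ↦ hderiv hx.1.le) ?_ ⟨huv.le, hv⟩
  rintro a ⟨hua, ha⟩ b ⟨hub, hb⟩ hab hneg
  have ha₀ := hu.trans hua
  have hb₀ := hu.trans hub
  have hz : b + 1 / b ≤ a + 1 / a :=
    add_one_div_antitoneOn ⟨ha₀, ha.le⟩ ⟨hb₀, hb.le⟩ hab.le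
  have hrate : 1 - s + slopeRate (a + 1 / a) < 0 := by
    simpa using (div_lt_iff₀ ha₀).1 hneg
  have hz₃ := lt_three_of_slopeRate_neg (two_le_add_one_div ha₀) (by linarith)
  have hmono := slopeRate_monotoneOn ⟨two_le_add_one_div hb₀, hz.trans hz₃.le⟩
    ⟨two_le_add_one_div ha₀, hz₃.le⟩ hz
  exact div_nonpos_of_nonpos_of_nonneg (by linarith) hb₀.le

lemma hasDerivAt_logGap (hs : s ≠ 0) (ht : 0 < t) :
    HasDerivAt (logGap s) ((t ^ s * (1 + t ^ 2 + t ^ 3) - t * (1 + t + t ^ 3))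
      / (t * (1 + t ^ s) * (1 + t ^ 2) * (1 + t + t ^ 2))) t := by
  have hts := Real.rpow_pos_of_pos ht s
  have h₁ : HasDerivAt (fun t : ℝ ↦ 1 + t ^ s) (s * t ^ (s - 1)) t :=
    (Real.hasDerivAt_rpow_const (Or.inl ht.ne')).const_add 1
  have h₂ : HasDerivAt (fun t : ℝ ↦ 1 + t ^ 2) (2 * t) t := by
    simpa using (hasDerivAt_pow 2 t).const_add 1
  have h₃ : HasDerivAt (fun t : ℝ ↦ 1 + t + t ^ 2) (1 + 2 * t) t := by
    simpa using ((hasDerivAt_id t).const_add 1).fun_add (hasDerivAt_pow 2 t)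
  have hlog := (((h₁.log (by positivity)).const_mul (1 / s)).add
    ((h₂.log (by positivity)).const_mul (1 / 2))).sub (h₃.log (by positivity))
  refine hlog.congr_deriv ?_
  rw [Real.rpow_sub_one ht.ne']
  generalize t ^ s = w at hts
  field_simp
  ring

lemma logSlope_eq_log_sub_log (s : ℝ) (ht : 0 < t) :
    logSlope s t = Real.log (t * (1 + t + t ^ 3)) - Real.log (t ^ s * (1 + t ^ 2 + t ^ 3)) := by
  have hts := Real.rpow_pos_of_pos ht s
  rw [Real.log_mul ht.ne' (by positivity), Real.log_mul hts.ne' (by positivity), Real.log_rpow ht,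
    logSlope]
  ring

lemma logSlope_pos_iff (s : ℝ) (ht : 0 < t) :
    0 < logSlope s t ↔ t ^ s * (1 + t ^ 2 + t ^ 3) < t * (1 + t + t ^ 3) := by
  rw [logSlope_eq_log_sub_log s ht, sub_pos, Real.log_lt_log_iff (by positivity) (by positivity)]

lemma logSlope_nonneg_iff (s : ℝ) (ht : 0 < t) :
    0 ≤ logSlope s t ↔ t ^ s * (1 + t ^ 2 + t ^ 3) ≤ t * (1 + t + t ^ 3) := by
  rw [logSlope_eq_log_sub_log s ht, sub_nonneg, Real.log_le_log_iff (by positivity) (by positivity)]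

lemma continuousOn_logGap (hs : 0 < s) : ContinuousOn (logGap s) (Ici 0) := by
  have hrpow : ContinuousOn (fun t : ℝ ↦ t ^ s) (Ici 0) :=
    (Real.continuous_rpow_const hs.le).continuousOn
  unfold logGap
  refine ContinuousOn.sub (ContinuousOn.add ?_ ?_) ?_
  · exact continuousOn_const.mul ((continuousOn_const.add hrpow).log fun t ht ↦
      (add_pos_of_pos_of_nonneg one_pos (Real.rpow_nonneg ht s)).ne')
  · exact continuousOn_const.mul (ContinuousOn.log (by fun_prop) fun t _ ↦ by positivity)
  · exact ContinuousOn.log (by fun_prop) fun t (ht : 0 ≤ t) ↦ by positivity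

lemma logGap_nonneg (hs : 0 < s) (hs' : Real.logb 2 3 ≤ 1 / s + 1 / 2) (ht : t ∈ Icc 0 1) :
    0 ≤ logGap s t := by
  have hs₁ : s ≤ 1 := (one_le_div hs).1 (by linarith [three_halves_lt_logb_two_three])
  have hzero : logGap s 0 = 0 := by simp [logGap, Real.zero_rpow hs.ne']
  have hone : 0 ≤ logGap s 1 := by
    rw [Real.logb, div_le_iff₀ (Real.log_pos one_lt_two)] at hs'
    rw [logGap, Real.one_rpow, one_pow, one_add_one_eq_two, two_add_one_eq_three]
    linarith
  have hmin : min (logGap s 0) (logGap s 1) = 0 := by rw [hzero, min_eq_left hone]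
  rw [← hmin]
  refine min_le_of_deriv_crossing ((continuousOn_logGap hs).mono Icc_subset_Ici_self)
    (fun x hx ↦ hasDerivAt_logGap hs.ne' hx.1) ?_ ht
  rintro u ⟨hu, -⟩ v ⟨hv, hv₁⟩ huv hneg
  have hslope_u : 0 < logSlope s u := by
    rw [logSlope_pos_iff s hu]
    rw [div_lt_iff₀ (by positivity), zero_mul] at hneg
    exact sub_neg.1 hneg
  have hslope_v := logSlope_nonneg_of_lt hs₁ hu huv hv₁.le hslope_u
  exact div_nonpos_of_nonpos_of_nonneg (sub_nonpos.2 ((logSlope_nonneg_iff s hv).1 hslope_v))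
    (by positivity)

lemma one_add_add_sq_le (hs : 0 < s) (hs' : Real.logb 2 3 ≤ 1 / s + 1 / 2) (ht : t ∈ Icc 0 1) :
    1 + t + t ^ 2 ≤ √(1 + t ^ 2) * (1 + t ^ s) ^ (1 / s) := by
  have ht₀ : 0 ≤ t := ht.1
  have hpos : 0 < (1 + t ^ s) ^ (1 / s) := by positivity
  have hgap := logGap_nonneg hs hs' ht
  rw [← Real.log_le_log_iff (by positivity) (by positivity),
    Real.log_mul (by positivity) hpos.ne', Real.log_sqrt (by positivity),
    Real.log_rpow (by positivity)]
  rw [logGap] at hgap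
  linarith

lemma sq_add_mul_add_sq_le (hs : 0 < s) (hs' : Real.logb 2 3 ≤ 1 / s + 1 / 2) {X Y : ℝ}
    (hX : 0 ≤ X) (hY : 0 ≤ Y) :
    X ^ 2 + X * Y + Y ^ 2 ≤ √(X ^ 2 + Y ^ 2) * (X ^ s + Y ^ s) ^ (1 / s) := by
  wlog hYX : Y ≤ X generalizing X Y
  · have h := this hY hX (le_of_not_ge hYX)
    rw [add_comm (Y ^ 2) (X ^ 2), add_comm (Y ^ s)] at h
    linarith
  rcases hX.eq_or_lt with rfl | hX₀
  · obtain rfl : Y = 0 := le_antisymm hYX hY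
    simp
  obtain ⟨t, ht, rfl⟩ : ∃ t ∈ Icc (0 : ℝ) 1, Y = X * t :=
    ⟨Y / X, ⟨by positivity, div_le_one_of_le₀ hYX hX⟩, by field_simp⟩
  have ht₀ : 0 ≤ t := ht.1
  calc X ^ 2 + X * (X * t) + (X * t) ^ 2 = X ^ 2 * (1 + t + t ^ 2) := by ring
    _ ≤ X ^ 2 * (√(1 + t ^ 2) * (1 + t ^ s) ^ (1 / s)) := by
      gcongr
      exact one_add_add_sq_le hs hs' ht
    _ = √(X ^ 2 * (1 + t ^ 2)) * (X ^ s * (1 + t ^ s)) ^ (1 / s) := by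
      rw [Real.sqrt_mul (sq_nonneg X), Real.sqrt_sq hX, Real.mul_rpow (by positivity)
        (by positivity), one_div, Real.rpow_rpow_inv hX hs.ne']
      ring
    _ = √(X ^ 2 + (X * t) ^ 2) * (X ^ s + (X * t) ^ s) ^ (1 / s) := by
      rw [Real.mul_rpow hX ht.1]
      ring_nf

/-- Multiplying out reduces this to two applications of AM-GM:
`2 (a² + b²) (c² + d²) R ≤ (a² + b²)² R² + (c² + d²)²` and `2 a b c d R ≤ (a b R)² + (c d)²`. -/
lemma endpoint_polynomial_le {a b c d R : ℝ} (hab : a ^ 4 + b ^ 4 = 1)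
    (hR : R ^ 2 = c ^ 4 + d ^ 4) :
    ((a ^ 3 * c) ^ 2 + (a ^ 3 * d + b ^ 3 * c) ^ 2 + (b ^ 3 * d) ^ 2) * R
      ≤ c ^ 4 + c ^ 2 * d ^ 2 + d ^ 4 := by
  set w := (a * b) ^ 2
  have hw₁ : 0 ≤ 1 - w := by nlinarith [sq_nonneg (a ^ 2 - b ^ 2)]
  have hsix : a ^ 6 + b ^ 6 = (a ^ 2 + b ^ 2) * (1 - w) := by
    rw [← hab]; ring
  have hsq_ab : (a ^ 2 + b ^ 2) ^ 2 = 1 + 2 * w := by rw [← hab]; ring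
  have hsq_cd : (c ^ 2 + d ^ 2) ^ 2 = R ^ 2 + 2 * (c * d) ^ 2 := by rw [hR]; ring
  have hsum : (a ^ 2 + b ^ 2) * (c ^ 2 + d ^ 2) * R ≤ R ^ 2 * (1 + w) + (c * d) ^ 2 := by
    nlinarith [sq_nonneg (R * (a ^ 2 + b ^ 2) - (c ^ 2 + d ^ 2)), hsq_ab, hsq_cd]
  have hprod : 2 * (a * b) * (c * d) * R ≤ w * R ^ 2 + (c * d) ^ 2 := by
    nlinarith [sq_nonneg (a * b * R - c * d)]
  calc
    _ = (1 - w) * ((a ^ 2 + b ^ 2) * (c ^ 2 + d ^ 2) * R) + w * (2 * (a * b) * (c * d) * R) := by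
      linear_combination ((c ^ 2 + d ^ 2) * R) * hsix
    _ ≤ (1 - w) * (R ^ 2 * (1 + w) + (c * d) ^ 2) + w * (w * R ^ 2 + (c * d) ^ 2) := by
      gcongr
    _ = c ^ 4 + c ^ 2 * d ^ 2 + d ^ 4 := by linear_combination hR

lemma rpow_three_quarters {A : ℝ} (hA : 0 ≤ A) : A ^ (3 / 4 : ℝ) = (A ^ (1 / 4 : ℝ)) ^ 3 := by
  rw [← Real.rpow_mul_natCast hA]
  norm_num

lemma rpow_one_quarter_pow_four {A : ℝ} (hA : 0 ≤ A) : (A ^ (1 / 4 : ℝ)) ^ 4 = A := by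
  rw [← Real.rpow_mul_natCast hA]
  norm_num

lemma pow_four_add_le_sqrt {κ : ℝ} (hκ : Real.logb 2 3 ≤ 2 * κ + 1 / 2) {C D : ℝ} (hC : 0 ≤ C)
    (hD : 0 ≤ D) (hCD : C + D = 1) :
    (C ^ κ) ^ 4 + (C ^ κ) ^ 2 * (D ^ κ) ^ 2 + (D ^ κ) ^ 4 ≤ √((C ^ κ) ^ 4 + (D ^ κ) ^ 4) := by
  have hκ₀ : 0 < 2 * κ := by linarith [three_halves_lt_logb_two_three]
  have hnorm {x : ℝ} (hx : 0 ≤ x) : ((x ^ κ) ^ 2) ^ (1 / (2 * κ)) = x := by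
    rw [← Real.rpow_mul_natCast hx, mul_comm κ, Nat.cast_ofNat, one_div,
      Real.rpow_rpow_inv hx hκ₀.ne']
  have h := sq_add_mul_add_sq_le (one_div_pos.2 hκ₀) (by rwa [one_div_one_div])
    (sq_nonneg (C ^ κ)) (sq_nonneg (D ^ κ))
  rw [hnorm hC, hnorm hD, hCD, Real.one_rpow, mul_one] at h
  simpa only [← pow_mul] using h

lemma three_quarters_mem_youngRegion {κ : ℝ} (hκ : Real.logb 2 3 ≤ 2 * κ + 1 / 2) :
    (3 / 4, κ) ∈ youngRegion 2 := by
  have hκ₀ : 0 < κ := by linarith [three_halves_lt_logb_two_three]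
  refine ⟨by norm_num, hκ₀, fun A B C D hA hB hC hD hAB hCD ↦ ?_⟩
  have hR₀ : 0 < √((C ^ κ) ^ 4 + (D ^ κ) ^ 4) := by
    rcases hC.eq_or_lt with rfl | hC'
    · rw [show D = 1 by linarith]
      positivity
    · positivity
  have hpoly := endpoint_polynomial_le (a := A ^ (1 / 4 : ℝ)) (b := B ^ (1 / 4 : ℝ))
    (by rwa [rpow_one_quarter_pow_four hA, rpow_one_quarter_pow_four hB])
    (Real.sq_sqrt (by positivity : 0 ≤ (C ^ κ) ^ 4 + (D ^ κ) ^ 4))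
  rw [← rpow_three_quarters hA, ← rpow_three_quarters hB] at hpoly
  simp only [Real.rpow_two]
  exact (mul_le_iff_le_one_left hR₀).1 (hpoly.trans (pow_four_add_le_sqrt hκ hC hD hCD))

lemma mem_youngRegion_two {x y : ℝ} (hsum : x + y = (1 + Real.logb 2 3) / 2) (hx : x ≤ 3 / 4)
    (hy : y ≤ 3 / 4) : (x, y) ∈ youngRegion 2 := by
  have hlog : Real.logb 2 3 < 2 := by
    rw [Real.logb_lt_iff_lt_rpow (by norm_num) (by norm_num)]
    norm_num
  set κ := Real.logb 2 3 / 2 - 1 / 4 with hκ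
  have hend : (3 / 4, κ) ∈ youngRegion 2 := three_quarters_mem_youngRegion (by linarith)
  have hlen : 0 < 3 / 4 - κ := by linarith
  set θ := (3 / 4 - x) / (3 / 4 - κ)
  have hθ : θ * (3 / 4 - κ) = 3 / 4 - x := div_mul_cancel₀ _ hlen.ne'
  have hθ₁ : θ ≤ 1 := (div_le_one hlen).2 (by linarith)
  have hcomb := convex_youngRegion one_le_two (swap_mem_youngRegion hend) hend
    (div_nonneg (sub_nonneg.2 hx) hlen.le) (sub_nonneg.2 hθ₁) (add_sub_cancel θ 1)
  convert hcomb using 1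
  ext <;> simp only [Prod.swap_prod_mk, Prod.smul_mk, Prod.mk_add_mk, smul_eq_mul] <;> linarith

end Endpoint

section Necessity

lemma deriv_deriv_nonneg_of_isLocalMin {f : ℝ → ℝ} {x : ℝ} (h : IsLocalMin f x)
    (hc : ContinuousAt f x) : 0 ≤ deriv (deriv f) x := by
  by_contra! hneg
  have hmax : IsLocalMax f x := isLocalMax_of_deriv_deriv_neg hneg h.deriv_eq_zero hc
  have hconst : f =ᶠ[𝓝 x] fun _ ↦ f x := by
    filter_upwards [h, hmax] with y hy₁ hy₂ using le_antisymm hy₂ hy₁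
  have hzero : deriv (deriv f) x = 0 := by simp [hconst.deriv.deriv_eq]
  exact hneg.ne hzero

/-- On the critical line, Young's inequality for the functions `f = (1 + x, 1 - x)` and
`g = (1, 1)` on `{0, 1}` says that `0 ≤ perturbationGap p x`. -/
noncomputable def perturbationGap (p x : ℝ) : ℝ :=
  (1 + x) ^ p + (1 - x) ^ p - 2 * (1 + x ^ 2 / 3) ^ (p / 2)

/-- The derivative of `perturbationGap p` on `(-1, 1)`. -/
noncomputable def perturbationGapDeriv (p x : ℝ) : ℝ :=
  p * (1 + x) ^ (p - 1) - p * (1 - x) ^ (p - 1) - 2 * p / 3 * x * (1 + x ^ 2 / 3) ^ (p / 2 - 1)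

lemma hasDerivAt_one_add_sq_div_three (x : ℝ) :
    HasDerivAt (fun x : ℝ ↦ 1 + x ^ 2 / 3) (2 * x / 3) x := by
  simpa using ((hasDerivAt_pow 2 x).div_const 3).const_add 1

lemma hasDerivAt_perturbationGap (p : ℝ) {x : ℝ} (hx : x ∈ Ioo (-1) 1) :
    HasDerivAt (perturbationGap p) (perturbationGapDeriv p x) x := by
  have hadd := ((hasDerivAt_id x).const_add 1).rpow_const (p := p)
    (Or.inl (by simp only [id]; linarith [hx.1]))
  have hsub := ((hasDerivAt_id x).const_sub 1).rpow_const (p := p)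
    (Or.inl (by simp only [id]; linarith [hx.2]))
  have hsq := (hasDerivAt_one_add_sq_div_three x).rpow_const (p := p / 2)
    (Or.inl (by positivity))
  refine ((hadd.add hsub).sub (hsq.const_mul 2)).congr_deriv ?_
  simp only [perturbationGapDeriv, id]
  ring

lemma hasDerivAt_perturbationGapDeriv_zero (p : ℝ) :
    HasDerivAt (perturbationGapDeriv p) (2 * p * (p - 4 / 3)) 0 := by
  have hadd := (((hasDerivAt_id (0 : ℝ)).const_add 1).rpow_const (p := p - 1)
    (Or.inl (by norm_num))).const_mul p
  have hsub := (((hasDerivAt_id (0 : ℝ)).const_sub 1).rpow_const (p := p - 1)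
    (Or.inl (by norm_num))).const_mul p
  have hsq := (hasDerivAt_one_add_sq_div_three 0).rpow_const (p := p / 2 - 1)
    (Or.inl (by positivity))
  have hlin := (hasDerivAt_id (0 : ℝ)).const_mul (2 * p / 3)
  refine ((hadd.sub hsub).sub (hlin.mul hsq)).congr_deriv ?_
  simp only [id_eq, add_zero, sub_zero, Real.one_rpow, ne_eq, OfNat.ofNat_ne_zero,
    not_false_eq_true, zero_pow, zero_div, mul_zero, zero_mul, mul_one]
  ring

lemma four_thirds_le_of_perturbationGap_nonneg {p : ℝ} (hp : 0 < p)
    (h : ∀ x ∈ Ioo (-1 : ℝ) 1, 0 ≤ perturbationGap p x) : 4 / 3 ≤ p := by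
  have hnhds : Ioo (-1 : ℝ) 1 ∈ 𝓝 0 := Ioo_mem_nhds (by norm_num) (by norm_num)
  have hzero : perturbationGap p 0 = 0 := by norm_num [perturbationGap]
  have hmin : IsLocalMin (perturbationGap p) 0 := by
    filter_upwards [hnhds] with x hx using hzero.trans_le (h x hx)
  have hderiv : deriv (perturbationGap p) =ᶠ[𝓝 0] perturbationGapDeriv p := by
    filter_upwards [hnhds] with x hx using (hasDerivAt_perturbationGap p hx).deriv
  have hsecond := deriv_deriv_nonneg_of_isLocalMin hmin
    (hasDerivAt_perturbationGap p (mem_of_mem_nhds hnhds)).continuousAt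
  rw [hderiv.deriv_eq, (hasDerivAt_perturbationGapDeriv_zero p).deriv] at hsecond
  linarith [nonneg_of_mul_nonneg_right hsecond (by positivity)]

/-- The function on `ℤ` with values `a` at `0`, `b` at `1`, and `0` elsewhere. -/
def pairFun (a b : ℝ) : (Fin 1 → ℤ) → ℝ :=
  fun x ↦ if x 0 = 0 then a else if x 0 = 1 then b else 0

lemma supportedInCube_pairFun (a b : ℝ) : SupportedInCube (pairFun a b) := by
  intro x hx
  have h : ¬(x 0 = 0 ∨ x 0 = 1) := fun h ↦ hx fun i ↦ by rwa [Subsingleton.elim i 0]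
  rw [not_or] at h
  simp [pairFun, h]

lemma slice_pairFun_zero (a b : ℝ) : slice (pairFun a b) 0 = fun _ ↦ a := by
  funext y
  simp [slice, pairFun]

lemma slice_pairFun_one (a b : ℝ) : slice (pairFun a b) 1 = fun _ ↦ b := by
  funext y
  simp [slice, pairFun]

lemma lnorm_pairFun_rpow {p : ℝ} (hp : p ≠ 0) (a b : ℝ) :
    lnorm p (pairFun a b) ^ p = |a| ^ p + |b| ^ p := by
  rw [(supportedInCube_pairFun a b).lnorm_rpow hp, slice_pairFun_zero, slice_pairFun_one,
    lnorm_fin_zero hp, lnorm_fin_zero hp]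

lemma lnorm_two_cconv_pairFun_sq (a b c d : ℝ) :
    lnorm 2 (cconv (pairFun a b) (pairFun c d)) ^ 2
      = (a * c) ^ 2 + (a * d + b * c) ^ 2 + (b * d) ^ 2 := by
  have h := (supportedInCube_pairFun a b).lnorm_cconv_rpow (supportedInCube_pairFun c d)
    (two_ne_zero (α := ℝ))
  simpa only [slice_pairFun_zero, slice_pairFun_one, lnorm_fin_zero two_ne_zero, Pi.add_apply,
    cconv_fin_zero, Real.rpow_two, sq_abs] using h

lemma lnormE_pairFun_one_one {p : ℝ≥0∞} (hp : p ≠ 0) :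
    lnormE p (pairFun 1 1) = 2 ^ p.toReal⁻¹ := by
  rcases eq_or_ne p ∞ with rfl | hp'
  · have hle (x : Fin 1 → ℤ) : |pairFun 1 1 x| ≤ 1 := by
      unfold pairFun
      split_ifs <;> simp
    rw [lnormE_top, ENNReal.toReal_top, inv_zero, Real.rpow_zero]
    refine le_antisymm (ciSup_le hle) (le_ciSup_of_le ⟨1, forall_mem_range.2 hle⟩ 0 ?_)
    simp [pairFun]
  · have hp₀ := ENNReal.toReal_pos hp hp'
    rw [lnormE_of_ne_top hp', Real.eq_rpow_inv (lnorm_nonneg _ _) zero_le_two hp₀.ne',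
      lnorm_pairFun_rpow hp₀.ne']
    norm_num

lemma two_mul_rpow_half_le {r M z : ℝ} (hr : 0 < r) (hM : 0 ≤ M) (hz : 0 ≤ z)
    (h : (2 ^ r⁻¹) ^ 2 * z ≤ M ^ 2) : 2 * z ^ (r / 2) ≤ M ^ r := by
  have hsq {y : ℝ} (hy : 0 ≤ y) : (y ^ 2) ^ (r / 2) = y ^ r := by
    rw [← Real.rpow_natCast_mul hy, Nat.cast_ofNat, mul_div_cancel₀ r two_ne_zero]
  calc 2 * z ^ (r / 2) = ((2 ^ r⁻¹) ^ 2 * z) ^ (r / 2) := by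
        rw [Real.mul_rpow (by positivity) hz, hsq (by positivity),
          Real.rpow_inv_rpow two_pos.le hr.ne']
    _ ≤ (M ^ 2) ^ (r / 2) := by gcongr
    _ = M ^ r := hsq hM

lemma rpow_inv_mul_rpow_inv_sq {r s : ℝ} (h : r⁻¹ + s⁻¹ = Real.logb 2 6 / 2) :
    ((2 : ℝ) ^ r⁻¹ * 2 ^ s⁻¹) ^ 2 = 6 := by
  rw [← Real.rpow_add two_pos, h, ← Real.rpow_mul_natCast two_pos.le, Nat.cast_ofNat,
    div_mul_cancel₀ _ two_ne_zero, Real.rpow_logb two_pos (by norm_num) (by norm_num)]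

lemma inv_toReal_le_three_quarters {p q : ℝ≥0∞} (hp : p ≠ 0) (hq : q ≠ 0)
    (hpq : p.toReal⁻¹ + q.toReal⁻¹ = Real.logb 2 6 / 2)
    (h : ∀ f g : (Fin 1 → ℤ) → ℝ, SupportedInCube f → SupportedInCube g →
      lnorm 2 (cconv f g) ≤ lnormE p f * lnormE q g) : p.toReal⁻¹ ≤ 3 / 4 := by
  rcases eq_or_ne p ∞ with rfl | hp'
  · norm_num
  have hp₀ := ENNReal.toReal_pos hp hp'
  suffices 4 / 3 ≤ p.toReal by
    rw [inv_le_comm₀ hp₀ (by norm_num)]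
    linarith
  refine four_thirds_le_of_perturbationGap_nonneg hp₀ fun x hx ↦ sub_nonneg.2 ?_
  have hpos : 0 < 1 + x := by linarith [hx.1]
  have hpos' : 0 < 1 - x := by linarith [hx.2]
  have hyoung := pow_le_pow_left₀ (lnorm_nonneg _ _)
    (h _ _ (supportedInCube_pairFun (1 + x) (1 - x)) (supportedInCube_pairFun 1 1)) 2
  rw [lnorm_two_cconv_pairFun_sq, lnormE_of_ne_top hp', lnormE_pairFun_one_one hq] at hyoung
  set M := lnorm p.toReal (pairFun (1 + x) (1 - x)) with hM
  have hnorm : (2 ^ p.toReal⁻¹) ^ 2 * (1 + x ^ 2 / 3) ≤ M ^ 2 := by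
    refine le_of_mul_le_mul_right ?_ (by positivity : (0 : ℝ) < (2 ^ q.toReal⁻¹) ^ 2)
    linear_combination hyoung + (1 + x ^ 2 / 3) * rpow_inv_mul_rpow_inv_sq hpq
  calc 2 * (1 + x ^ 2 / 3) ^ (p.toReal / 2) ≤ M ^ p.toReal :=
        two_mul_rpow_half_le hp₀ (lnorm_nonneg _ _) (by positivity) hnorm
    _ = (1 + x) ^ p.toReal + (1 - x) ^ p.toReal := by
      rw [hM, lnorm_pairFun_rpow hp₀.ne', abs_of_pos hpos, abs_of_pos hpos']

end Necessity

section CriticalLine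

lemma ofReal_le_iff_inv_toReal_le_inv {a : ℝ} (ha : 0 < a) {p : ℝ≥0∞} (hp : p ≠ 0) :
    ENNReal.ofReal a ≤ p ↔ p.toReal⁻¹ ≤ a⁻¹ := by
  rcases eq_or_ne p ∞ with rfl | hp'
  · simp [ha.le]
  · rw [ENNReal.ofReal_le_iff_le_toReal hp', inv_le_inv₀ (ENNReal.toReal_pos hp hp') ha]

lemma le_ofReal_iff_inv_le_inv_toReal {a : ℝ} (ha : 0 < a) {p : ℝ≥0∞} (hp : p ≠ 0) :
    p ≤ ENNReal.ofReal a ↔ a⁻¹ ≤ p.toReal⁻¹ := by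
  rcases eq_or_ne p ∞ with rfl | hp'
  · simp [ha]
  · rw [ENNReal.le_ofReal_iff_toReal_le hp' ha.le, inv_le_inv₀ ha (ENNReal.toReal_pos hp hp')]

lemma inv_toReal_add_inv_toReal {p q : ℝ≥0∞} {a : ℝ} (ha : 0 ≤ a)
    (h : 1 / p + 1 / q = ENNReal.ofReal a) :
    p ≠ 0 ∧ q ≠ 0 ∧ p.toReal⁻¹ + q.toReal⁻¹ = a := by
  have htop : p⁻¹ + q⁻¹ ≠ ∞ := by
    rw [← one_div, ← one_div, h]
    exact ENNReal.ofReal_ne_top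
  obtain ⟨hp, hq⟩ := ENNReal.add_ne_top.1 htop
  refine ⟨by simpa using hp, by simpa using hq, ?_⟩
  rw [← ENNReal.toReal_inv, ← ENNReal.toReal_inv, ← ENNReal.toReal_add hp hq, ← one_div,
    ← one_div q, h, ENNReal.toReal_ofReal ha]

lemma logb_two_six : Real.logb 2 6 = 1 + Real.logb 2 3 := by
  rw [show (6 : ℝ) = 2 * 3 by norm_num, Real.logb_mul two_ne_zero three_ne_zero,
    Real.logb_self_eq_one one_lt_two]

lemma lnorm_two_cconv_le_lnormE {p q : ℝ≥0∞}
    (hpq : p.toReal⁻¹ + q.toReal⁻¹ = Real.logb 2 6 / 2) (hp : p.toReal⁻¹ ≤ 3 / 4)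
    (hq : q.toReal⁻¹ ≤ 3 / 4) {d : ℕ} {f g : (Fin d → ℤ) → ℝ} (hf : SupportedInCube f)
    (hg : SupportedInCube g) : lnorm 2 (cconv f g) ≤ lnormE p f * lnormE q g := by
  have hmem := mem_youngRegion_two (hpq.trans (by rw [logb_two_six])) hp hq
  have hp' : p ≠ ∞ := fun h ↦ hmem.1.ne' (by simp [h])
  have hq' : q ≠ ∞ := fun h ↦ hmem.2.1.ne' (by simp [h])
  simpa [lnormE_of_ne_top hp', lnormE_of_ne_top hq'] using lnorm_cconv_le one_le_two hmem hf hg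

theorem young_hypercube_r_two_critical_line_general (p q : ℝ≥0∞)
    (hpq : 1 / p + 1 / q = ENNReal.ofReal (Real.logb 2 6 / 2)) :
    (∀ d : ℕ, 1 ≤ d → ∀ f g : (Fin d → ℤ) → ℝ,
      SupportedInCube f → SupportedInCube g →
        lnorm 2 (cconv f g) ≤ lnormE p f * lnormE q g)
    ↔ (ENNReal.ofReal (4 / 3) ≤ p ∧ ENNReal.ofReal (4 / 3) ≤ q ∧
       p ≤ ENNReal.ofReal (1 / (Real.logb 2 3 / 2 - 1 / 4)) ∧
       q ≤ ENNReal.ofReal (1 / (Real.logb 2 3 / 2 - 1 / 4))) := by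
  have hκ : 0 < 1 / (Real.logb 2 3 / 2 - 1 / 4) :=
    one_div_pos.2 (by linarith [three_halves_lt_logb_two_three])
  obtain ⟨hp, hq, hsum⟩ := inv_toReal_add_inv_toReal
    (by rw [logb_two_six]; linarith [three_halves_lt_logb_two_three]) hpq
  rw [ofReal_le_iff_inv_toReal_le_inv (by norm_num) hp,
    ofReal_le_iff_inv_toReal_le_inv (by norm_num) hq, le_ofReal_iff_inv_le_inv_toReal hκ hp,
    le_ofReal_iff_inv_le_inv_toReal hκ hq, one_div, inv_inv, inv_div]
  constructor
  · intro h
    have hp₁ := inv_toReal_le_three_quarters hp hq hsum (h 1 le_rfl)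
    have hq₁ := inv_toReal_le_three_quarters hq hp ((add_comm _ _).trans hsum)
      fun f g hf hg ↦ by rw [cconv_comm, mul_comm]; exact h 1 le_rfl g f hg hf
    rw [logb_two_six] at hsum
    exact ⟨hp₁, hq₁, by linarith, by linarith⟩
  · rintro ⟨hp₁, hq₁, -, -⟩ d - f g hf hg
    exact lnorm_two_cconv_le_lnormE hsum hp₁ hq₁ hf hg

end CriticalLine

theorem young_hypercube_r_two_critical_line (p q : ℝ≥0∞) (hp : 1 ≤ p) (hq : 1 ≤ q)
    (hpq : 1 / p + 1 / q = ENNReal.ofReal (Real.logb 2 6 / 2)) :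
    (∀ d : ℕ, 1 ≤ d → ∀ f g : (Fin d → ℤ) → ℝ,
      SupportedInCube f → SupportedInCube g →
        lnorm 2 (cconv f g) ≤ lnormE p f * lnormE q g)
    ↔ (ENNReal.ofReal (4 / 3) ≤ p ∧ ENNReal.ofReal (4 / 3) ≤ q ∧
       p ≤ ENNReal.ofReal (1 / (Real.logb 2 3 / 2 - 1 / 4)) ∧
       q ≤ ENNReal.ofReal (1 / (Real.logb 2 3 / 2 - 1 / 4))) :=
  young_hypercube_r_two_critical_line_general p q hpq
end

section
/- Let d ≥ 1, let k ≥ 2 be an integer, set q_k := log₂(2 + 2^k), and let A, B ⊆ {-1,1}^d (viewed as subsets of ℤ^d). Then the k-higher additive energy satisfies E_k(A,B) ≤ |A|^{q_k/2} |B|^{q_k/2}. -/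
open scoped BigOperators

/-- The `k`-higher additive energy of two finite subsets `A, B ⊆ ℤ^d`:
the number of tuples `(a₁,…,a_k,b₁,…,b_k) ∈ Aᵏ × Bᵏ` with
`a₁ - b₁ = a₂ - b₂ = ⋯ = a_k - b_k`. -/
noncomputable def addEnergy (d k : ℕ) (A B : Finset (Fin d → ℤ)) : ℕ :=
  Set.ncard {ab : (Fin k → (Fin d → ℤ)) × (Fin k → (Fin d → ℤ)) |
    (∀ i, ab.1 i ∈ A) ∧ (∀ i, ab.2 i ∈ B) ∧
      ∀ i j, ab.1 i - ab.2 i = ab.1 j - ab.2 j}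

/-!
Split `A = A₀ ∪ A₁` and `B = B₀ ∪ B₁` according to the value, `u` or `v`, of a coordinate that is
not constant on one of the two sets. In that coordinate the differences coming from `(A₀, B₁)`, from
`(A₁, B₀)` and from the two pairs `(A₀, B₀)`, `(A₁, B₁)` are `u - v`, `v - u` and `0`, which are
distinct, so only the last two pairs interact; Minkowski's inequality gives
`E_s(A, B) ≤ E_s(A₀, B₁) + E_s(A₁, B₀) + (E_s(A₀, B₀) ^ (1 / s) + E_s(A₁, B₁) ^ (1 / s)) ^ s`.
By induction the bound `E_s(A, B) ≤ (|A| |B|) ^ p` reduces to a two-point inequality in the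
cardinalities `a, b, c, d` of `A₀, A₁, B₀, B₁`, with equality at `a = b = c = d` exactly when
`4 ^ p = 2 + 2 ^ s`.

With `g = √(abcd)` the pairs `(ad, bc)` and `(ac, bd)` have the common geometric mean `g`. The
two-point inequality then follows, by convexity of powers, from
`x ^ p + y ^ p + (4 ^ p - 2) * g ^ p ≤ (x + y + 2 * g) ^ p` for `x * y = g ^ 2`. Writing
`x = g * exp (2 * t)` and `y = g * exp (-2 * t)`, this says that with `q = 2 * p` the function
`(2 * cosh t) ^ q - 2 * cosh (q * t)` is minimal at `t = 0`; its monotonicity for `t ≥ 0` comes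
down to convexity of `x ^ (q - 1)`.
-/

section Convexity

theorem convexOn_add_le_add_of_add_eq {𝕜 : Type*} [Field 𝕜] [LinearOrder 𝕜]
    [IsStrictOrderedRing 𝕜] {S : Set 𝕜} {f : 𝕜 → 𝕜} (hf : ConvexOn 𝕜 S f) {x y z w : 𝕜}
    (hx : x ∈ S) (hw : w ∈ S) (hxy : x ≤ y) (hyw : y ≤ w) (h : y + z = x + w) :
    f y + f z ≤ f x + f w := by
  obtain ⟨α, β, hα, hβ, hαβ, rfl⟩ := Icc_subset_segment ⟨hxy, hyw⟩
  obtain rfl : z = β • x + α • w := by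
    simp only [smul_eq_mul] at h ⊢
    linear_combination h - (x + w) * hαβ
  calc f (α • x + β • w) + f (β • x + α • w)
      ≤ (α • f x + β • f w) + (β • f x + α • f w) :=
        add_le_add (hf.2 hx hw hα hβ hαβ) (hf.2 hx hw hβ hα (add_comm α β ▸ hαβ))
    _ = f x + f w := by
        simp only [smul_eq_mul]
        linear_combination (f x + f w) * hαβ

theorem rpow_add_rpow_le_of_add_le {x y z w p : ℝ} (hp : 1 ≤ p) (hx : 0 ≤ x) (hxy : x ≤ y)
    (hxz : x ≤ z) (h : y + z ≤ x + w) : y ^ p + z ^ p ≤ x ^ p + w ^ p :=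
  calc y ^ p + z ^ p ≤ x ^ p + (y + z - x) ^ p :=
        convexOn_add_le_add_of_add_eq (convexOn_rpow hp) hx
          (show 0 ≤ y + z - x by linarith) hxy (by linarith) (by ring)
    _ ≤ x ^ p + w ^ p := by
        gcongr <;> linarith

theorem rpow_sub_rpow_le {a b q : ℝ} (hb : 0 ≤ b) (hba : b ≤ a) (hq : 2 ≤ q) :
    a ^ q - b ^ q ≤ (a - b) * (a + b) ^ (q - 1) := by
  have ha : 0 ≤ a := hb.trans hba
  have rpow_eq {x : ℝ} (hx : 0 ≤ x) : x ^ q = x * x ^ (q - 1) := by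
    rw [← Real.rpow_one_add' hx (by linarith), add_sub_cancel]
  rcases ha.eq_or_lt with rfl | ha'
  · simp [le_antisymm hba hb]
  have convex : a ^ (q - 1) ≤ (1 - b / a) * (a + b) ^ (q - 1) + b / a * b ^ (q - 1) := by
    have hmean : (1 - b / a) * (a + b) + b / a * b = a := by field_simp; ring
    simpa only [smul_eq_mul, hmean] using (convexOn_rpow (p := q - 1) (by linarith)).2
      (add_nonneg ha hb : 0 ≤ a + b) hb (sub_nonneg.2 ((div_le_one ha').2 hba)) (div_nonneg hb ha)
      (sub_add_cancel 1 (b / a))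
  calc a ^ q - b ^ q = a * a ^ (q - 1) - b * b ^ (q - 1) := by rw [rpow_eq ha, rpow_eq hb]
    _ ≤ a * ((1 - b / a) * (a + b) ^ (q - 1) + b / a * b ^ (q - 1)) - b * b ^ (q - 1) := by
        gcongr
    _ = (a - b) * (a + b) ^ (q - 1) := by field_simp; ring

end Convexity

section Hyperbolic

open Real

theorem sinh_mul_le {q x : ℝ} (hq : 2 ≤ q) (hx : 0 ≤ x) :
    sinh (q * x) ≤ (2 * cosh x) ^ (q - 1) * sinh x := by
  have h := rpow_sub_rpow_le (exp_pos (-x)).le (exp_le_exp.2 (neg_le_self hx)) hq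
  rw [← exp_mul, ← exp_mul, neg_mul, mul_comm x q] at h
  have hcosh : exp x + exp (-x) = 2 * cosh x := by rw [cosh_eq]; ring
  have hsinh (y : ℝ) : exp y - exp (-y) = 2 * sinh y := by rw [sinh_eq]; ring
  rw [hcosh, hsinh, hsinh] at h
  linarith

theorem monotoneOn_two_mul_cosh_rpow_sub {q : ℝ} (hq : 2 ≤ q) :
    MonotoneOn (fun x ↦ (2 * cosh x) ^ q - 2 * cosh (q * x)) (Set.Ici 0) := by
  have hderiv (x : ℝ) : HasDerivAt (fun x ↦ (2 * cosh x) ^ q - 2 * cosh (q * x))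
      (2 * sinh x * q * (2 * cosh x) ^ (q - 1) - 2 * (sinh (q * x) * q)) x := by
    have hpow := ((hasDerivAt_cosh x).const_mul 2).rpow_const (p := q)
      (Or.inl (mul_pos two_pos (cosh_pos x)).ne')
    exact hpow.sub ((hasDerivAt_const_mul q).cosh.const_mul 2)
  refine monotoneOn_of_deriv_nonneg (convex_Ici 0)
    (fun x _ ↦ (hderiv x).continuousAt.continuousWithinAt)
    (fun x _ ↦ (hderiv x).differentiableAt.differentiableWithinAt) fun x hx ↦ ?_
  rw [interior_Ici] at hx
  rw [(hderiv x).deriv]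
  linear_combination 2 * q * sinh_mul_le hq hx.le

theorem two_rpow_sub_two_le {q : ℝ} (hq : 2 ≤ q) (x : ℝ) :
    2 ^ q - 2 ≤ (2 * cosh x) ^ q - 2 * cosh (q * x) := by
  have h := monotoneOn_two_mul_cosh_rpow_sub hq Set.self_mem_Ici (abs_nonneg x) (abs_nonneg x)
  have habs : cosh (q * |x|) = cosh (q * x) := by
    rw [← cosh_abs (q * |x|), abs_mul, abs_abs, ← abs_mul, cosh_abs]
  simpa [habs] using h

end Hyperbolic

section GeometricMean

variable {a b g p : ℝ}

theorem rpow_add_rpow_add_le_of_sq_eq_mul (ha : 0 ≤ a) (hb : 0 ≤ b) (hg : 0 ≤ g)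
    (h : g ^ 2 = a * b) (hp : 1 ≤ p) :
    a ^ p + b ^ p + (4 ^ p - 2) * g ^ p ≤ (a + b + 2 * g) ^ p := by
  rcases hg.eq_or_lt with rfl | hg'
  · simpa [Real.zero_rpow (by linarith : p ≠ 0)] using Real.add_rpow_le_rpow_add ha hb hp
  have ha' : 0 < a := pos_of_mul_pos_left (h ▸ pow_pos hg' 2) hb
  obtain ⟨t, rfl⟩ : ∃ t, g * Real.exp (2 * t) = a :=
    ⟨Real.log (a / g) / 2, by
      rw [mul_div_cancel₀ _ two_ne_zero, Real.exp_log (by positivity), mul_div_cancel₀ _ hg'.ne']⟩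
  obtain rfl : g * Real.exp (-(2 * t)) = b := by
    rw [Real.exp_neg, ← div_eq_mul_inv, div_eq_iff (Real.exp_pos _).ne']
    exact mul_left_cancel₀ hg'.ne' (by linear_combination h)
  have hleft : (g * Real.exp (2 * t)) ^ p + (g * Real.exp (-(2 * t))) ^ p =
      g ^ p * (2 * Real.cosh (2 * p * t)) := by
    rw [Real.mul_rpow hg (Real.exp_nonneg _), Real.mul_rpow hg (Real.exp_nonneg _),
      ← Real.exp_mul, ← Real.exp_mul, Real.cosh_eq]
    ring_nf
  have hright : g * Real.exp (2 * t) + g * Real.exp (-(2 * t)) + 2 * g =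
      g * (2 * Real.cosh t) ^ (2 : ℝ) := by
    have hexp : Real.exp t * Real.exp (-t) = 1 := by
      rw [← Real.exp_add, add_neg_cancel, Real.exp_zero]
    rw [Real.rpow_two, Real.cosh_eq, two_mul t, neg_add, Real.exp_add, Real.exp_add]
    linear_combination -2 * g * hexp
  have h4 : (4 : ℝ) ^ p = 2 ^ (2 * p) := by rw [Real.rpow_mul two_pos.le]; norm_num
  rw [hleft, hright, Real.mul_rpow hg (by positivity),
    ← Real.rpow_mul (mul_nonneg two_pos.le (Real.cosh_pos t).le), h4]
  linear_combination g ^ p * two_rpow_sub_two_le (q := 2 * p) (by linarith) t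

theorem rpow_add_rpow_add_le_of_two_mul_le {c : ℝ} (ha : 0 ≤ a) (hb : 0 ≤ b) (hg : 0 ≤ g)
    (h : g ^ 2 = a * b) (hc : 2 * g ≤ c) (hp : 1 ≤ p) :
    a ^ p + b ^ p + (c + 2 * g) ^ p ≤ (c + (a + b)) ^ p + 2 * g ^ p := by
  have amgm := two_mul_le_add_of_sq_le_mul ha hb h.le
  have hincr : (c + 2 * g) ^ p + (a + b + 2 * g) ^ p ≤ (4 * g) ^ p + (c + (a + b)) ^ p :=
    rpow_add_rpow_le_of_add_le hp (by linarith) (by linarith) (by linarith) (by linarith)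
  rw [Real.mul_rpow (by norm_num) hg] at hincr
  linarith [rpow_add_rpow_add_le_of_sq_eq_mul ha hb hg h hp]

theorem rpow_add_rpow_rpow_add_le_of_sq_eq_mul {e s : ℝ} (ha : 0 ≤ a) (hb : 0 ≤ b) (hg : 0 ≤ g)
    (h : g ^ 2 = a * b) (he : 1 ≤ 2 * e) (hs : 2 ≤ s) :
    (a ^ e + b ^ e) ^ s + (4 ^ (e * s) - 2 ^ s) * g ^ (e * s) ≤ (a + b + 2 * g) ^ (e * s) := by
  have h4 : (0 : ℝ) ≤ 4 := by norm_num
  have sq_rpow {x : ℝ} (hx : 0 ≤ x) : (x ^ e) ^ 2 = x ^ (2 * e) := by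
    rw [← Real.rpow_mul_natCast hx, Nat.cast_two, mul_comm]
  have rpow_half {x : ℝ} (hx : 0 ≤ x) : (x ^ 2) ^ (s / 2) = x ^ s := by
    rw [← Real.rpow_natCast_mul hx, Nat.cast_two, mul_div_cancel₀ _ two_ne_zero]
  have hgeom : (g ^ e) ^ 2 = a ^ e * b ^ e := by
    rw [← Real.mul_rpow ha hb, ← h, ← Real.rpow_natCast_mul hg, sq_rpow hg, Nat.cast_two]
  have amgm : 2 * g ^ e ≤ a ^ e + b ^ e :=
    two_mul_le_add_of_sq_le_mul (by positivity) (by positivity) hgeom.le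
  have hbase : 2 * g ^ e ≤ (4 * g) ^ e := by
    rw [Real.mul_rpow h4 hg]
    gcongr
    calc (2 : ℝ) ≤ 2 ^ (2 * e) := by
          simpa using Real.rpow_le_rpow_of_exponent_le one_le_two he
      _ = 4 ^ e := by rw [Real.rpow_mul two_pos.le]; norm_num
  -- This is the claim for `s = 2`; convexity of `x ^ (s / 2)` then gives it for `s`.
  have hsquare : (a ^ e + b ^ e) ^ 2 + ((4 * g) ^ e) ^ 2 ≤
      (2 * g ^ e) ^ 2 + ((a + b + 2 * g) ^ e) ^ 2 := by
    have := rpow_add_rpow_add_le_of_sq_eq_mul ha hb hg h he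
    rw [← sq_rpow ha, ← sq_rpow hb, ← sq_rpow hg, ← sq_rpow h4, ← sq_rpow (by positivity)] at this
    rw [Real.mul_rpow h4 hg]
    linear_combination this - 2 * hgeom
  have hincr := rpow_add_rpow_le_of_add_le (p := s / 2) (by linarith) (sq_nonneg _)
    (pow_le_pow_left₀ (by positivity) amgm 2) (pow_le_pow_left₀ (by positivity) hbase 2) hsquare
  rw [rpow_half (by positivity), rpow_half (by positivity), rpow_half (by positivity),
    rpow_half (by positivity), ← Real.rpow_mul (by positivity), ← Real.rpow_mul (by positivity),
    Real.mul_rpow h4 hg, Real.mul_rpow two_pos.le (by positivity), ← Real.rpow_mul hg] at hincr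
  linarith

theorem two_point_inequality {a b c d p s : ℝ} (ha : 0 ≤ a) (hb : 0 ≤ b) (hc : 0 ≤ c) (hd : 0 ≤ d)
    (hs : 2 ≤ s) (hp : (4 : ℝ) ^ p = 2 + 2 ^ s) :
    (a * d) ^ p + (b * c) ^ p + ((a * c) ^ (p / s) + (b * d) ^ (p / s)) ^ s ≤
      ((a + b) * (c + d)) ^ p := by
  have hsp : s ≤ 2 * p := by
    rw [← Real.rpow_le_rpow_left_iff one_lt_two, Real.rpow_mul two_pos.le]
    norm_num [hp]
  set g := √(a * b * c * d)
  have hg : 0 ≤ g := Real.sqrt_nonneg _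
  have hgsq : g ^ 2 = a * b * c * d := Real.sq_sqrt (by positivity)
  have amgm : 2 * g ≤ a * c + b * d :=
    two_mul_le_add_of_sq_le_mul (mul_nonneg ha hc) (mul_nonneg hb hd) (by rw [hgsq]; linarith)
  have had := rpow_add_rpow_add_le_of_two_mul_le (mul_nonneg ha hd) (mul_nonneg hb hc) hg
    (by rw [hgsq]; ring) amgm (by linarith : 1 ≤ p)
  have hac := rpow_add_rpow_rpow_add_le_of_sq_eq_mul (e := p / s) (mul_nonneg ha hc)
    (mul_nonneg hb hd) hg (by rw [hgsq]; ring) (by field_simp; linarith) hs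
  rw [div_mul_cancel₀ p (by linarith), hp, add_sub_cancel_right] at hac
  rw [show (a + b) * (c + d) = a * c + b * d + (a * d + b * c) by ring]
  linarith

end GeometricMean

section Combinatorics

open Finset
open scoped Pointwise

section Convolution

variable {G : Type*} [AddGroup G] [DecidableEq G] {A A₁ A₂ B B₁ B₂ : Finset G}

theorem addConvolution_union_left (h : Disjoint A₁ A₂) (B : Finset G) (x : G) :
    (A₁ ∪ A₂).addConvolution B x = A₁.addConvolution B x + A₂.addConvolution B x := by
  simp only [addConvolution, union_product, filter_union]
  exact card_union_of_disjoint (disjoint_filter_filter (disjoint_product.2 (.inl h)))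

theorem addConvolution_neg_union_right (A : Finset G) (h : Disjoint B₁ B₂) (x : G) :
    A.addConvolution (-(B₁ ∪ B₂)) x = A.addConvolution (-B₁) x + A.addConvolution (-B₂) x := by
  simp only [← card_sub_eq, product_union, filter_union]
  exact card_union_of_disjoint (disjoint_filter_filter (disjoint_product.2 (.inr h)))

theorem addConvolution_neg_eq_zero_of_map_ne {H : Type*} [AddGroup H] (φ : G →+ H) {u v : H}
    (hA : ∀ a ∈ A, φ a = u) (hB : ∀ b ∈ B, φ b = v) {x : G} (hx : φ x ≠ u - v) :
    A.addConvolution (-B) x = 0 := by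
  rw [addConvolution_eq_zero, ← sub_eq_add_neg, mem_sub]
  rintro ⟨a, ha, b, hb, rfl⟩
  exact hx (by rw [map_sub, hA a ha, hB b hb])

end Convolution

section Energy

variable {G : Type*} [AddGroup G] [DecidableEq G]

/-- The higher additive energy `∑ₓ #{(a, b) ∈ A × B | a - b = x} ^ s` with a real exponent `s`,
which is `E_k(A, B)` for `s = k` a positive integer. The number of representations of `x` as a
difference is written as the convolution of `A` with `-B`. -/
noncomputable def diffEnergy (s : ℝ) (A B : Finset G) : ℝ :=
  ∑ x ∈ A - B, (A.addConvolution (-B) x : ℝ) ^ s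

variable {A B D : Finset G} {s : ℝ}

theorem sum_addConvolution_neg_rpow (hs : s ≠ 0) (hD : A - B ⊆ D) :
    ∑ x ∈ D, (A.addConvolution (-B) x : ℝ) ^ s = diffEnergy s A B := by
  refine (sum_subset hD fun x _ hx ↦ ?_).symm
  rw [sub_eq_add_neg] at hx
  rw [addConvolution_eq_zero.2 hx, Nat.cast_zero, Real.zero_rpow hs]

theorem diffEnergy_nonneg : 0 ≤ diffEnergy s A B := by
  unfold diffEnergy
  positivity

theorem diffEnergy_le_rpow_of_card_le_one (hA : #A ≤ 1) (hB : #B ≤ 1) (p : ℝ) :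
    diffEnergy s A B ≤ (#A * #B) ^ p := by
  rcases A.eq_empty_or_nonempty with rfl | hA'
  · simp [diffEnergy, Real.rpow_nonneg]
  rcases B.eq_empty_or_nonempty with rfl | hB'
  · simp [diffEnergy, Real.rpow_nonneg]
  obtain ⟨a, rfl⟩ := card_eq_one.1 (hA.antisymm hA'.card_pos)
  obtain ⟨b, rfl⟩ := card_eq_one.1 (hB.antisymm hB'.card_pos)
  simp [diffEnergy, addConvolution, filter_singleton, sub_eq_add_neg]

end Energy

section Splitting

theorem disjoint_of_forall_apply_eq {α β : Type*} {C₀ C₁ : Finset α} {f : α → β} {x y : β}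
    (hxy : x ≠ y) (h₀ : ∀ c ∈ C₀, f c = x) (h₁ : ∀ c ∈ C₁, f c = y) : Disjoint C₀ C₁ :=
  disjoint_left.2 fun c hc₀ hc₁ ↦ hxy ((h₀ c hc₀).symm.trans (h₁ c hc₁))

variable {G H : Type*} [AddGroup G] [DecidableEq G] [AddGroup H] {A₀ A₁ B₀ B₁ : Finset G}
  {φ : G →+ H} {u v : H}

theorem addConvolution_neg_union_union_rpow {s : ℝ} (hs : s ≠ 0) (huv : u - v ≠ v - u)
    (hA₀ : ∀ a ∈ A₀, φ a = u) (hA₁ : ∀ a ∈ A₁, φ a = v)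
    (hB₀ : ∀ b ∈ B₀, φ b = u) (hB₁ : ∀ b ∈ B₁, φ b = v) (x : G) :
    ((A₀ ∪ A₁).addConvolution (-(B₀ ∪ B₁)) x : ℝ) ^ s =
      (A₀.addConvolution (-B₁) x : ℝ) ^ s + (A₁.addConvolution (-B₀) x : ℝ) ^ s +
        ((A₀.addConvolution (-B₀) x : ℝ) + A₁.addConvolution (-B₁) x) ^ s := by
  have hne : u ≠ v := by rintro rfl; exact huv rfl
  have hB := disjoint_of_forall_apply_eq hne hB₀ hB₁
  rw [addConvolution_union_left (disjoint_of_forall_apply_eq hne hA₀ hA₁),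
    addConvolution_neg_union_right _ hB, addConvolution_neg_union_right _ hB]
  have h₀₀ : φ x ≠ 0 → A₀.addConvolution (-B₀) x = 0 := fun h ↦
    addConvolution_neg_eq_zero_of_map_ne φ hA₀ hB₀ (by rwa [sub_self])
  have h₁₁ : φ x ≠ 0 → A₁.addConvolution (-B₁) x = 0 := fun h ↦
    addConvolution_neg_eq_zero_of_map_ne φ hA₁ hB₁ (by rwa [sub_self])
  have h₀₁ : φ x ≠ u - v → A₀.addConvolution (-B₁) x = 0 :=
    addConvolution_neg_eq_zero_of_map_ne φ hA₀ hB₁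
  have h₁₀ : φ x ≠ v - u → A₁.addConvolution (-B₀) x = 0 :=
    addConvolution_neg_eq_zero_of_map_ne φ hA₁ hB₀
  by_cases hx : φ x = 0
  · have hx₀₁ : φ x ≠ u - v := by rwa [hx, ne_comm, sub_ne_zero]
    have hx₁₀ : φ x ≠ v - u := by rwa [hx, ne_comm, sub_ne_zero, ne_comm]
    simp [h₀₁ hx₀₁, h₁₀ hx₁₀, hs]
  · by_cases hx₀₁ : φ x = u - v
    · simp [h₀₀ hx, h₁₁ hx, h₁₀ (hx₀₁ ▸ huv), hs]
    · simp [h₀₀ hx, h₁₁ hx, h₀₁ hx₀₁, hs]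

theorem diffEnergy_union_union_le {s : ℝ} (hs : 1 ≤ s) (huv : u - v ≠ v - u)
    (hA₀ : ∀ a ∈ A₀, φ a = u) (hA₁ : ∀ a ∈ A₁, φ a = v)
    (hB₀ : ∀ b ∈ B₀, φ b = u) (hB₁ : ∀ b ∈ B₁, φ b = v) :
    diffEnergy s (A₀ ∪ A₁) (B₀ ∪ B₁) ≤ diffEnergy s A₀ B₁ + diffEnergy s A₁ B₀ +
      (diffEnergy s A₀ B₀ ^ s⁻¹ + diffEnergy s A₁ B₁ ^ s⁻¹) ^ s := by
  have hs₀ : 0 < s := by linarith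
  set D := (A₀ ∪ A₁) - (B₀ ∪ B₁)
  have hsum {A B : Finset G} (hA : A ⊆ A₀ ∪ A₁) (hB : B ⊆ B₀ ∪ B₁) :
      ∑ x ∈ D, (A.addConvolution (-B) x : ℝ) ^ s = diffEnergy s A B :=
    sum_addConvolution_neg_rpow hs₀.ne' (sub_subset_sub hA hB)
  have minkowski := Real.Lp_add_le_of_nonneg D hs
    (fun x _ ↦ (A₀.addConvolution (-B₀) x).cast_nonneg)
    (fun x _ ↦ (A₁.addConvolution (-B₁) x).cast_nonneg)
  rw [hsum subset_union_left subset_union_left, hsum subset_union_right subset_union_right,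
    one_div, Real.rpow_inv_le_iff_of_pos (by positivity) (add_nonneg
      (Real.rpow_nonneg diffEnergy_nonneg _) (Real.rpow_nonneg diffEnergy_nonneg _)) hs₀]
    at minkowski
  calc diffEnergy s (A₀ ∪ A₁) (B₀ ∪ B₁)
      = diffEnergy s A₀ B₁ + diffEnergy s A₁ B₀ + ∑ x ∈ D,
          ((A₀.addConvolution (-B₀) x : ℝ) + A₁.addConvolution (-B₁) x) ^ s := by
        rw [← hsum subset_rfl subset_rfl, ← hsum subset_union_left subset_union_right,
          ← hsum subset_union_right subset_union_left, ← sum_add_distrib, ← sum_add_distrib]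
        exact sum_congr rfl fun x _ ↦
          addConvolution_neg_union_union_rpow hs₀.ne' huv hA₀ hA₁ hB₀ hB₁ x
    _ ≤ _ := by gcongr

end Splitting

section TwoValued

theorem filter_eq_union_filter_eq {α β : Type*} [DecidableEq α] [DecidableEq β] {C : Finset α}
    {f : α → β} {x y : β} (h : ∀ c ∈ C, f c = x ∨ f c = y) :
    {c ∈ C | f c = x} ∪ {c ∈ C | f c = y} = C := by
  rw [← filter_or, filter_true_of_mem h]

theorem card_filter_eq_add_card_filter_eq {α β : Type*} [DecidableEq β] {C : Finset α}
    {f : α → β} {x y : β} (hxy : x ≠ y) (h : ∀ c ∈ C, f c = x ∨ f c = y) :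
    #{c ∈ C | f c = x} + #{c ∈ C | f c = y} = #C := by
  classical
  rw [← card_union_of_disjoint (disjoint_of_forall_apply_eq hxy (fun c hc ↦ (mem_filter.1 hc).2)
    fun c hc ↦ (mem_filter.1 hc).2), filter_eq_union_filter_eq h]

theorem diffEnergy_union_union_le_rpow {G H : Type*} [AddGroup G] [DecidableEq G] [AddGroup H]
    {A₀ A₁ B₀ B₁ : Finset G} {φ : G →+ H} {u v : H} {p s : ℝ} (hs : 2 ≤ s)
    (hp : (4 : ℝ) ^ p = 2 + 2 ^ s) (huv : u - v ≠ v - u)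
    (hA₀ : ∀ a ∈ A₀, φ a = u) (hA₁ : ∀ a ∈ A₁, φ a = v)
    (hB₀ : ∀ b ∈ B₀, φ b = u) (hB₁ : ∀ b ∈ B₁, φ b = v)
    (h₀₀ : diffEnergy s A₀ B₀ ≤ (#A₀ * #B₀) ^ p) (h₀₁ : diffEnergy s A₀ B₁ ≤ (#A₀ * #B₁) ^ p)
    (h₁₀ : diffEnergy s A₁ B₀ ≤ (#A₁ * #B₀) ^ p) (h₁₁ : diffEnergy s A₁ B₁ ≤ (#A₁ * #B₁) ^ p) :
    diffEnergy s (A₀ ∪ A₁) (B₀ ∪ B₁) ≤ (#(A₀ ∪ A₁) * #(B₀ ∪ B₁)) ^ p := by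
  have hcard {C₀ C₁ : Finset G} (h₀ : ∀ c ∈ C₀, φ c = u) (h₁ : ∀ c ∈ C₁, φ c = v) :
      (#(C₀ ∪ C₁) : ℝ) = #C₀ + #C₁ := by
    have hne : u ≠ v := by rintro rfl; exact huv rfl
    exact_mod_cast card_union_of_disjoint (disjoint_of_forall_apply_eq hne h₀ h₁)
  have root_le {A B : Finset G} (h : diffEnergy s A B ≤ (#A * #B) ^ p) :
      diffEnergy s A B ^ s⁻¹ ≤ (#A * #B : ℝ) ^ (p / s) := by
    rw [div_eq_mul_inv, Real.rpow_mul (by positivity)]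
    exact Real.rpow_le_rpow diffEnergy_nonneg h (by positivity)
  calc diffEnergy s (A₀ ∪ A₁) (B₀ ∪ B₁)
      ≤ diffEnergy s A₀ B₁ + diffEnergy s A₁ B₀ +
          (diffEnergy s A₀ B₀ ^ s⁻¹ + diffEnergy s A₁ B₁ ^ s⁻¹) ^ s :=
        diffEnergy_union_union_le (by linarith) huv hA₀ hA₁ hB₀ hB₁
    _ ≤ (#A₀ * #B₁ : ℝ) ^ p + (#A₁ * #B₀ : ℝ) ^ p +
          ((#A₀ * #B₀ : ℝ) ^ (p / s) + (#A₁ * #B₁ : ℝ) ^ (p / s)) ^ s := by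
        have nonneg₀ := Real.rpow_nonneg (diffEnergy_nonneg (s := s) (A := A₀) (B := B₀)) s⁻¹
        have nonneg₁ := Real.rpow_nonneg (diffEnergy_nonneg (s := s) (A := A₁) (B := B₁)) s⁻¹
        gcongr
        · exact root_le h₀₀
        · exact root_le h₁₁
    _ ≤ ((#A₀ + #A₁ : ℝ) * (#B₀ + #B₁)) ^ p :=
        two_point_inequality (by positivity) (by positivity) (by positivity) (by positivity) hs hp
    _ = (#(A₀ ∪ A₁) * #(B₀ ∪ B₁)) ^ p := by rw [hcard hA₀ hA₁, hcard hB₀ hB₁]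

theorem exists_filter_nonempty_of_one_lt_card {ι : Type*} {G : ι → Type*} [∀ i, DecidableEq (G i)]
    {A : Finset (∀ i, G i)} {u v : ∀ i, G i} (hA : ∀ a ∈ A, ∀ i, a i = u i ∨ a i = v i)
    (hcard : 1 < #A) :
    ∃ i, u i ≠ v i ∧ {a ∈ A | a i = u i}.Nonempty ∧ {a ∈ A | a i = v i}.Nonempty := by
  obtain ⟨a, ha, b, hb, hab⟩ := one_lt_card.1 hcard
  obtain ⟨i, hi⟩ := Function.ne_iff.1 hab
  refine ⟨i, ?_⟩
  rcases hA a ha i with hau | hav <;> rcases hA b hb i with hbu | hbv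
  · exact absurd (hau.trans hbu.symm) hi
  · exact ⟨hau ▸ hbv ▸ hi, ⟨a, mem_filter.2 ⟨ha, hau⟩⟩, ⟨b, mem_filter.2 ⟨hb, hbv⟩⟩⟩
  · exact ⟨hbu ▸ hav ▸ hi.symm, ⟨b, mem_filter.2 ⟨hb, hbu⟩⟩, ⟨a, mem_filter.2 ⟨ha, hav⟩⟩⟩
  · exact absurd (hav.trans hbv.symm) hi

variable {ι : Type*} {G : ι → Type*} [∀ i, AddGroup (G i)] [∀ i, IsAddTorsionFree (G i)]
  [DecidableEq (∀ i, G i)] {u v : ∀ i, G i}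

theorem diffEnergy_le_card_mul_card_rpow {p s : ℝ} (hs : 2 ≤ s) (hp : (4 : ℝ) ^ p = 2 + 2 ^ s)
    {A B : Finset (∀ i, G i)} (hA : ∀ a ∈ A, ∀ i, a i = u i ∨ a i = v i)
    (hB : ∀ b ∈ B, ∀ i, b i = u i ∨ b i = v i) :
    diffEnergy s A B ≤ (#A * #B) ^ p := by
  classical
  induction hn : #A + #B using Nat.strong_induction_on generalizing A B with
  | _ n ih =>
  by_cases hsplit : ∃ i, u i ≠ v i ∧
      ({a ∈ A | a i = u i}.Nonempty ∧ {a ∈ A | a i = v i}.Nonempty ∨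
        {b ∈ B | b i = u i}.Nonempty ∧ {b ∈ B | b i = v i}.Nonempty)
  · obtain ⟨i, hi, hne⟩ := hsplit
    have hAcard := card_filter_eq_add_card_filter_eq hi fun a ha ↦ hA a ha i
    have hBcard := card_filter_eq_add_card_filter_eq hi fun b hb ↦ hB b hb i
    simp only [← card_pos] at hne
    have hpart (w w' : ∀ i, G i) (hlt : #{a ∈ A | a i = w i} + #{b ∈ B | b i = w' i} < n) :
        diffEnergy s {a ∈ A | a i = w i} {b ∈ B | b i = w' i} ≤
          (#{a ∈ A | a i = w i} * #{b ∈ B | b i = w' i}) ^ p :=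
      ih _ hlt (fun a ha ↦ hA a (mem_filter.1 ha).1) (fun b hb ↦ hB b (mem_filter.1 hb).1) rfl
    have huv : u i - v i ≠ v i - u i := by
      rwa [← neg_sub (u i), ne_comm, neg_ne_self, sub_ne_zero]
    have := diffEnergy_union_union_le_rpow (φ := Pi.evalAddMonoidHom G i) hs hp huv
      (fun a ha ↦ (mem_filter.1 ha).2) (fun a ha ↦ (mem_filter.1 ha).2)
      (fun b hb ↦ (mem_filter.1 hb).2) (fun b hb ↦ (mem_filter.1 hb).2)
      (hpart u u (by omega)) (hpart u v (by omega)) (hpart v u (by omega)) (hpart v v (by omega))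
    simp only [Pi.evalAddMonoidHom_apply] at this
    rwa [filter_eq_union_filter_eq fun a ha ↦ hA a ha i,
      filter_eq_union_filter_eq fun b hb ↦ hB b hb i] at this
  · refine diffEnergy_le_rpow_of_card_le_one ?_ ?_ p <;> by_contra! hcard
    · obtain ⟨i, hi, hne⟩ := exists_filter_nonempty_of_one_lt_card hA hcard
      exact hsplit ⟨i, hi, .inl hne⟩
    · obtain ⟨i, hi, hne⟩ := exists_filter_nonempty_of_one_lt_card hB hcard
      exact hsplit ⟨i, hi, .inr hne⟩

theorem higher_additive_energy_bound_general {s : ℝ} (hs : 2 ≤ s) {A B : Finset (∀ i, G i)}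
    (hA : ∀ a ∈ A, ∀ i, a i = u i ∨ a i = v i) (hB : ∀ b ∈ B, ∀ i, b i = u i ∨ b i = v i) :
    diffEnergy s A B ≤
      (#A : ℝ) ^ (Real.logb 2 (2 + 2 ^ s) / 2) * (#B : ℝ) ^ (Real.logb 2 (2 + 2 ^ s) / 2) := by
  rw [← Real.mul_rpow (by positivity) (by positivity)]
  refine diffEnergy_le_card_mul_card_rpow hs ?_ hA hB
  calc (4 : ℝ) ^ (Real.logb 2 (2 + 2 ^ s) / 2) = (2 ^ (2 : ℝ)) ^ (Real.logb 2 (2 + 2 ^ s) / 2) := by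
        norm_num
    _ = 2 + 2 ^ s := by
        rw [← Real.rpow_mul two_pos.le, mul_div_cancel₀ _ two_ne_zero,
          Real.rpow_logb two_pos (by norm_num) (by positivity)]

end TwoValued

section Tuples

theorem card_filter_forall_sub_eq {ι G : Type*} [Fintype ι] [DecidableEq ι] [AddGroup G]
    [DecidableEq G] (A B : Finset G) (x : G)
    [DecidablePred fun ab : (ι → G) × (ι → G) ↦ ∀ i, ab.1 i - ab.2 i = x] :
    #{ab ∈ Fintype.piFinset (fun _ : ι ↦ A) ×ˢ Fintype.piFinset (fun _ : ι ↦ B) |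
      ∀ i, ab.1 i - ab.2 i = x} = A.addConvolution (-B) x ^ Fintype.card ι := by
  rw [← card_sub_eq, ← card_univ, ← prod_const, ← Fintype.card_piFinset]
  refine card_nbij' (fun ab i ↦ (ab.1 i, ab.2 i)) (fun f ↦ (fun i ↦ (f i).1, fun i ↦ (f i).2))
    ?_ ?_ (fun _ _ ↦ rfl) (fun _ _ ↦ rfl)
  · intro ab hab
    simp only [coe_filter, mem_product, Fintype.mem_piFinset] at hab
    simpa using fun i ↦ ⟨⟨hab.1.1 i, hab.1.2 i⟩, hab.2 i⟩
  · intro f hf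
    simpa [forall_and] using hf

theorem addEnergy_eq_diffEnergy (d : ℕ) {k : ℕ} (hk : k ≠ 0) (A B : Finset (Fin d → ℤ)) :
    _root_.addEnergy d k A B = diffEnergy k A B := by
  have : NeZero k := ⟨hk⟩
  have hset : {ab : (Fin k → (Fin d → ℤ)) × (Fin k → (Fin d → ℤ)) |
      (∀ i, ab.1 i ∈ A) ∧ (∀ i, ab.2 i ∈ B) ∧ ∀ i j, ab.1 i - ab.2 i = ab.1 j - ab.2 j} =
      (A - B).biUnion fun x ↦ {ab ∈ Fintype.piFinset (fun _ : Fin k ↦ A) ×ˢ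
        Fintype.piFinset (fun _ : Fin k ↦ B) | ∀ i, ab.1 i - ab.2 i = x} := by
    ext ab
    simp only [Set.mem_ofPred_eq, coe_biUnion, Set.mem_iUnion, mem_coe, mem_filter, mem_product,
      Fintype.mem_piFinset, mem_sub]
    constructor
    · rintro ⟨hA, hB, hab⟩
      exact ⟨ab.1 0 - ab.2 0, ⟨_, hA 0, _, hB 0, rfl⟩, ⟨hA, hB⟩, fun i ↦ hab i 0⟩
    · rintro ⟨x, -, ⟨hA, hB⟩, hab⟩
      exact ⟨hA, hB, fun i j ↦ (hab i).trans (hab j).symm⟩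
  rw [_root_.addEnergy, hset, Set.ncard_coe_finset, card_biUnion]
  · simp [diffEnergy, card_filter_forall_sub_eq]
  · exact fun x _ y _ hxy ↦ disjoint_filter.2 fun ab _ hx hy ↦ hxy ((hx 0).symm.trans (hy 0))

end Tuples

end Combinatorics

theorem higher_additive_energy_bound (d k : ℕ) (hd : 1 ≤ d) (hk : 2 ≤ k)
    (A B : Finset (Fin d → ℤ))
    (hA : ∀ a ∈ A, ∀ i, a i = -1 ∨ a i = 1)
    (hB : ∀ b ∈ B, ∀ i, b i = -1 ∨ b i = 1) :
    (addEnergy d k A B : ℝ) ≤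
      (A.card : ℝ) ^ (Real.logb 2 (2 + 2 ^ (k : ℝ)) / 2) *
        (B.card : ℝ) ^ (Real.logb 2 (2 + 2 ^ (k : ℝ)) / 2) := by
  rw [addEnergy_eq_diffEnergy d (by omega)]
  exact higher_additive_energy_bound_general (mod_cast hk) hA hB
end
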